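/- Onset of photon loss (mass condition): let n be a nonnegative bounded solution of the Kompaneets equation with initial data n₀ (not identically 0) satisfying x² n₀(x) → 0 as x → ∞. If N(n₀) > N(n̂₀) = ∫₀^∞ x²/(eˣ − 1) dx = 2ζ(3), then there exists a finite time t with n(0,t) > 0; i.e., the onset time t* of photon loss is finite. -/

import Mathlib

/-!
Suppose that no photons are lost, so that `n(0,t) = 0` for all `t > 0`. In the variable `y = log x`
the function `m(y,t) = n(e^y,t)` solves
`m_t = m_yy + (e^y - 1 + 2 e^{-y} m) m_y + (2 e^y - 2) m` on the line and tends to `0` as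
`y → -∞` (`IsKompSol.toKS`). The total mass `∫ e^y m` is then conserved, and it exceeds the mass of
the equilibrium `nh y = n̂₀(e^y)`. The contradiction comes from a functional that blows up in finite
time, although it is bounded as long as the solution is.

The functional is `F(t) = ∫ φ e^y (m - nh)`, where `φ' = -q` and the weight `q` solves the linear
equation `q' = -1 + q (e^y - 3 + 2 e^{-y} nh)` (`qw_deriv`) and satisfies `1/4 ≤ e^y q ≤ 20`
(`qw_bounds`). With this choice the linear part of the equation, taken around the equilibrium,
integrates to the mass excess, and formally `F' = ∫ e^y (m - nh) + ∫ q (m - nh)²`. By the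
Cauchy–Schwarz inequality (`Slice.F_upper`) the last term is at least a multiple of `F²` once `F`
is large, so that `F' ≥ a + c max(F,0)²` with `a > 0`. Since `F` is bounded below by the mass
(`Slice.F_lower`), this is impossible on a long time interval (`riccati_blowup`). As `φ ~ e^{-y}`
is unbounded at `-∞`, the test function is cut off at `y ≈ -L`; the error is the mean of `m` near
`-L`, which tends to `0` as `L → ∞` after integration in time, exactly because `n(0,t) = 0`
(`leak_int`). This gives `KS.mass_le`.

The hypotheses only provide derivatives pointwise, with no joint continuity or local integrability,
so the weak form of the equation is not immediate from differentiation under the integral. It is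
obtained as follows. On a short time interval `[t, t + τ]` the solution is compared, by the
maximum principle, with the explicit function given by the heat flow of `m(·,t)` plus `τ` times the lower order
terms, up to `o(τ)` (`PtSol.upper_step`). Testing this expansion yields the right derivative of
`∫ θ m` (`PtSol.weak_right`); it is continuous in time, so it integrates to the weak form on
intervals (`KS.weak_interval`) and, after removing cutoffs, on the line (`KS.weak`).

The value `2 ∑ 1/(k+1)³` of the equilibrium mass is the termwise integral of the geometric series
of `x² / (eˣ - 1)` (`nhat_mass`).
-/

open MeasureTheory Filter Set Real Topology

/-- The Kompaneets photon flux `J(x,u) = x² u'(x) + (x² - 2x) u(x) + u(x)²`. -/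
noncomputable def kompFlux (u : ℝ → ℝ) (x : ℝ) : ℝ :=
  x ^ 2 * deriv u x + (x ^ 2 - 2 * x) * u x + u x ^ 2

/-- The Bose--Einstein equilibria `n̂_μ(x) = x²/(e^{x+μ} - 1)`. -/
noncomputable def nhat (μ x : ℝ) : ℝ := x ^ 2 / (Real.exp (x + μ) - 1)

/-- A (global-in-time) nonnegative solution of the Kompaneets equation
`∂ₜ n = ∂ₓ J(x, n(·,t))` on `(0,∞) × (0,∞)` with initial data `n₀`:
nonnegative, bounded, `C^{2,1}` in the interior, attaining the initial data,
continuous into `L¹`, and with `x² n → 0` and `x² ∂ₓ n → 0` as `x → ∞`,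
uniformly on the indicated time sets.  No boundary condition at `x = 0`. -/
structure IsKompSol (n : ℝ → ℝ → ℝ) (n₀ : ℝ → ℝ) : Prop where
  nonneg : ∀ x t : ℝ, 0 < x → 0 < t → 0 ≤ n x t
  bounded : ∃ M : ℝ, ∀ x t : ℝ, 0 < x → 0 < t → n x t ≤ M
  init : ∀ x : ℝ, 0 < x → n x 0 = n₀ x
  contOn : ContinuousOn (fun p : ℝ × ℝ => n p.1 p.2)
    ((Set.Ioi (0:ℝ)) ×ˢ (Set.Ioi (0:ℝ)))
  diff_x : ∀ t : ℝ, 0 < t → ∀ x : ℝ, 0 < x → DifferentiableAt ℝ (fun y => n y t) x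
  diff_xx : ∀ t : ℝ, 0 < t → ∀ x : ℝ, 0 < x →
    DifferentiableAt ℝ (deriv (fun y => n y t)) x
  diff_t : ∀ x : ℝ, 0 < x → ∀ t : ℝ, 0 < t → DifferentiableAt ℝ (fun τ => n x τ) t
  pde : ∀ x : ℝ, 0 < x → ∀ t : ℝ, 0 < t →
    deriv (fun τ => n x τ) t = deriv (fun y => kompFlux (fun z => n z t) y) x
  l1init : Filter.Tendsto (fun t => ∫ x in Set.Ioi (0:ℝ), |n x t - n₀ x|)
    (𝓝[>] (0:ℝ)) (nhds 0)
  decay : ∀ T : ℝ, 0 < T → ∀ ε : ℝ, 0 < ε → ∃ R : ℝ, 0 < R ∧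
    ∀ x : ℝ, R ≤ x → ∀ t : ℝ, 0 ≤ t → t < T → x ^ 2 * n x t < ε
  decay' : ∀ T : ℝ, 0 < T → ∀ ε : ℝ, 0 < ε → ∃ R : ℝ, 0 < R ∧
    ∀ x : ℝ, R ≤ x → ∀ t : ℝ, 1 / x ^ 2 ≤ t → t < T →
      |x ^ 2 * deriv (fun y => n y t) x| < ε

/-! ### Cutoff -/

/-- A `C²` transition from `0` to `1` together with its first two derivatives. -/
structure Cutoff where
  S : ℝ → ℝ
  S1 : ℝ → ℝ
  S2 : ℝ → ℝ
  C : ℝ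
  hC : 0 ≤ C
  h1 : ∀ y, HasDerivAt S (S1 y) y
  h2 : ∀ y, HasDerivAt S1 (S2 y) y
  c2 : Continuous S2
  nonneg : ∀ y, 0 ≤ S y
  le_one : ∀ y, S y ≤ 1
  zero : ∀ y, y ≤ 0 → S y = 0
  one : ∀ y, 1 ≤ y → S y = 1
  S1_nonneg : ∀ y, 0 ≤ S1 y
  S1_le : ∀ y, S1 y ≤ C
  S2_le : ∀ y, |S2 y| ≤ C
  S1_zero : ∀ y, y ≤ 0 → S1 y = 0
  S1_zero' : ∀ y, 1 ≤ y → S1 y = 0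
  S2_zero : ∀ y, y ≤ 0 → S2 y = 0
  S2_zero' : ∀ y, 1 ≤ y → S2 y = 0

namespace Cutoff

lemma c1 (k : Cutoff) : Continuous k.S1 :=
  continuous_iff_continuousAt.2 fun y => (k.h2 y).continuousAt

lemma c0 (k : Cutoff) : Continuous k.S :=
  continuous_iff_continuousAt.2 fun y => (k.h1 y).continuousAt

end Cutoff

/-- A continuous function that vanishes off `(0,1)` (stated through open rays and extended to the
endpoints by continuity). -/
lemma zero_closed_of_zero_open {g : ℝ → ℝ} (hg : Continuous g)
    (h0 : ∀ y < 0, g y = 0) (h1 : ∀ y > 1, g y = 0) :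
    (∀ y ≤ 0, g y = 0) ∧ (∀ y ≥ 1, g y = 0) := by
  have hcl : IsClosed {y | g y = 0} := isClosed_eq hg continuous_const
  constructor
  · have : closure (Iio (0:ℝ)) ⊆ {y | g y = 0} := hcl.closure_subset_iff.2 h0
    rw [closure_Iio] at this
    exact this
  · have : closure (Ioi (1:ℝ)) ⊆ {y | g y = 0} := hcl.closure_subset_iff.2 h1
    rw [closure_Ioi] at this
    exact this

lemma exists_cutoff : Nonempty Cutoff := by
  have hS : ContDiff ℝ 2 Real.smoothTransition := Real.smoothTransition.contDiff (n := 2)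
  have hd1 : ContDiff ℝ 1 (deriv Real.smoothTransition) :=
    ((contDiff_succ_iff_deriv (n := 1)).1 hS).2.2
  have hc2 : Continuous (deriv (deriv Real.smoothTransition)) := hd1.continuous_deriv_one
  have e0 : ∀ y < 0, Real.smoothTransition =ᶠ[𝓝 y] fun _ => 0 := fun y hy => by
    filter_upwards [Iio_mem_nhds hy] with z hz
    exact Real.smoothTransition.zero_of_nonpos (le_of_lt hz)
  have e1 : ∀ y > 1, Real.smoothTransition =ᶠ[𝓝 y] fun _ => 1 := fun y hy => by
    filter_upwards [Ioi_mem_nhds hy] with z hz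
    exact Real.smoothTransition.one_of_one_le (le_of_lt hz)
  have z1 := zero_closed_of_zero_open hd1.continuous
    (fun y hy => by rw [(e0 y hy).deriv_eq]; simp)
    (fun y hy => by rw [(e1 y hy).deriv_eq]; simp)
  have z2 := zero_closed_of_zero_open hc2
    (fun y hy => by rw [(e0 y hy).deriv.deriv_eq]; simp)
    (fun y hy => by rw [(e1 y hy).deriv.deriv_eq]; simp)
  obtain ⟨C1, hC1⟩ := isCompact_Icc.exists_bound_of_continuousOn
    (s := Icc (0:ℝ) 1) hd1.continuous.continuousOn
  obtain ⟨C2, hC2⟩ := isCompact_Icc.exists_bound_of_continuousOn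
    (s := Icc (0:ℝ) 1) hc2.continuousOn
  have hC0 : 0 ≤ max C1 C2 := (norm_nonneg _).trans ((hC1 0 (by simp)).trans (le_max_left _ _))
  refine ⟨⟨Real.smoothTransition, deriv Real.smoothTransition,
    deriv (deriv Real.smoothTransition), max C1 C2, hC0,
    fun y => ((hS.differentiable (by norm_num)) y).hasDerivAt,
    fun y => ((hd1.differentiable (by norm_num)) y).hasDerivAt, hc2,
    Real.smoothTransition.nonneg, Real.smoothTransition.le_one,
    fun y => Real.smoothTransition.zero_of_nonpos, fun y => Real.smoothTransition.one_of_one_le,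
    fun y => Real.smoothTransition.monotone.deriv_nonneg, ?_, ?_, z1.1, z1.2, z2.1, z2.2⟩⟩
  · intro y
    by_cases h : y ∈ Icc (0:ℝ) 1
    · exact (le_abs_self _).trans ((hC1 y h).trans (le_max_left _ _))
    · rw [mem_Icc, not_and_or, not_le, not_le] at h
      rcases h with h | h
      · rw [z1.1 y h.le]; exact hC0
      · rw [z1.2 y h.le]; exact hC0
  · intro y
    by_cases h : y ∈ Icc (0:ℝ) 1
    · exact ((hC2 y h).trans (le_max_right _ _))
    · rw [mem_Icc, not_and_or, not_le, not_le] at h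
      rcases h with h | h
      · rw [z2.1 y h.le]; simpa using hC0
      · rw [z2.2 y h.le]; simpa using hC0

/-! ### Gaussian averages -/

/-- The standard normal density. -/
noncomputable def gk (z : ℝ) : ℝ := (√(2 * π))⁻¹ * Real.exp (-(1 / 2) * z ^ 2)

lemma gk_cont : Continuous gk := by unfold gk; fun_prop

lemma gk_nonneg (z : ℝ) : 0 ≤ gk z := by unfold gk; positivity

lemma gk_int : Integrable gk := (integrable_exp_neg_mul_sq (by norm_num)).const_mul _

lemma gk_integral : ∫ z, gk z = 1 := by
  unfold gk
  rw [integral_const_mul, integral_gaussian]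
  rw [show π / (1 / 2) = 2 * π by ring]
  exact inv_mul_cancel₀ (by positivity)

lemma id_gk_int : Integrable (fun z => z * gk z) := by
  have := (integrable_mul_exp_neg_mul_sq (b := 1 / 2) (by norm_num)).const_mul (√(2 * π))⁻¹
  refine this.congr (ae_of_all _ fun z => ?_)
  simp only [gk]; ring

lemma abs_gk_int : Integrable (fun z => |z| * gk z) := by
  refine id_gk_int.abs.congr (ae_of_all _ fun z => ?_)
  simp [abs_mul, abs_of_nonneg (gk_nonneg z)]

/-- `∫ f(y + σ z) γ(z) dz`; with `σ = √(2τ)` this is the heat flow of `f` at time `τ`. -/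
noncomputable def gavg (f : ℝ → ℝ) (y σ : ℝ) : ℝ := ∫ z, f (y + σ * z) * gk z

lemma gavg_zero (f : ℝ → ℝ) (y : ℝ) : gavg f y 0 = f y := by
  simp [gavg, integral_const_mul, gk_integral]

lemma gavg_cont {f : ℝ → ℝ} (hf : Continuous f) {C : ℝ} (hC : ∀ y, |f y| ≤ C) :
    Continuous (fun p : ℝ × ℝ => gavg f p.1 p.2) := by
  unfold gavg
  refine continuous_of_dominated (bound := fun z => C * gk z) ?_ ?_ (gk_int.const_mul C) ?_
  · intro p
    have := gk_cont
    exact Continuous.aestronglyMeasurable (by fun_prop)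
  · intro p
    refine ae_of_all _ fun z => ?_
    rw [norm_mul, Real.norm_eq_abs, Real.norm_eq_abs, abs_of_nonneg (gk_nonneg z)]
    exact mul_le_mul_of_nonneg_right (hC _) (gk_nonneg z)
  · exact ae_of_all _ fun z => by fun_prop

lemma gavg_integrable {f : ℝ → ℝ} (hf : Continuous f) {C : ℝ} (hC : ∀ y, |f y| ≤ C) (y σ : ℝ) :
    Integrable (fun z => f (y + σ * z) * gk z) := by
  have := gk_cont
  refine (gk_int.const_mul C).mono' (Continuous.aestronglyMeasurable (by fun_prop)) ?_
  refine ae_of_all _ fun z => ?_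
  rw [norm_mul, Real.norm_eq_abs, Real.norm_eq_abs, abs_of_nonneg (gk_nonneg z)]
  exact mul_le_mul_of_nonneg_right (hC _) (gk_nonneg z)

lemma gavg_deriv {f f' : ℝ → ℝ} (hf : ∀ y, HasDerivAt f (f' y) y) (hf' : Continuous f')
    {C C' : ℝ} (hC : ∀ y, |f y| ≤ C) (hC' : ∀ y, |f' y| ≤ C') (y σ : ℝ) :
    HasDerivAt (fun y => gavg f y σ) (gavg f' y σ) y := by
  have hfc : Continuous f := continuous_iff_continuousAt.2 fun y => (hf y).continuousAt
  have := gk_cont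
  refine (hasDerivAt_integral_of_dominated_loc_of_deriv_le (s := univ)
    (F := fun y z => f (y + σ * z) * gk z) (F' := fun y z => f' (y + σ * z) * gk z)
    (bound := fun z => C' * gk z) univ_mem ?_ (gavg_integrable hfc hC y σ) ?_ ?_
    (gk_int.const_mul C') ?_).2
  · exact Eventually.of_forall fun x => Continuous.aestronglyMeasurable (by fun_prop)
  · exact Continuous.aestronglyMeasurable (by fun_prop)
  · refine ae_of_all _ fun z x _ => ?_
    rw [norm_mul, Real.norm_eq_abs, Real.norm_eq_abs, abs_of_nonneg (gk_nonneg z)]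
    exact mul_le_mul_of_nonneg_right (hC' _) (gk_nonneg z)
  · refine ae_of_all _ fun z x _ => ?_
    exact ((hf (x + σ * z)).comp_add_const x (σ * z)).mul_const _

/-- Time derivative of the heat flow. -/
lemma gavg_deriv_time {f f' : ℝ → ℝ} (hf : ∀ y, HasDerivAt f (f' y) y) (hf' : Continuous f')
    {C C' : ℝ} (hC : ∀ y, |f y| ≤ C) (hC' : ∀ y, |f' y| ≤ C') (y : ℝ) {τ : ℝ} (hτ : 0 < τ) :
    HasDerivAt (fun τ => gavg f y (√(2 * τ)))
      (∫ z, f' (y + √(2 * τ) * z) * (z / √(2 * τ)) * gk z) τ := by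
  have hfc : Continuous f := continuous_iff_continuousAt.2 fun y => (hf y).continuousAt
  have := gk_cont
  refine (hasDerivAt_integral_of_dominated_loc_of_deriv_le (s := Ioi (τ / 2))
    (F := fun τ z => f (y + √(2 * τ) * z) * gk z)
    (F' := fun τ z => f' (y + √(2 * τ) * z) * (z / √(2 * τ)) * gk z)
    (bound := fun z => (C' / √τ) * (|z| * gk z)) (Ioi_mem_nhds (by linarith)) ?_
    (gavg_integrable hfc hC y _) ?_ ?_ (abs_gk_int.const_mul _) ?_).2
  · exact Eventually.of_forall fun x => Continuous.aestronglyMeasurable (by fun_prop)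
  · exact Continuous.aestronglyMeasurable (by fun_prop)
  · refine ae_of_all _ fun z x hx => ?_
    have hx' : τ / 2 < x := hx
    have h1 : √τ ≤ √(2 * x) := Real.sqrt_le_sqrt (by linarith)
    have h2 : 0 < √τ := Real.sqrt_pos.2 hτ
    rw [norm_mul, norm_mul, norm_div, Real.norm_eq_abs, Real.norm_eq_abs, Real.norm_eq_abs,
      Real.norm_eq_abs, abs_of_nonneg (gk_nonneg z), abs_of_nonneg (Real.sqrt_nonneg _)]
    have hC0 : 0 ≤ C' := (abs_nonneg _).trans (hC' 0)
    calc |f' (y + √(2 * x) * z)| * (|z| / √(2 * x)) * gk z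
        ≤ C' * (|z| / √τ) * gk z := by
          have := gk_nonneg z
          have := hC' (y + √(2 * x) * z)
          gcongr
      _ = _ := by ring
  · refine ae_of_all _ fun z x hx => ?_
    have hx' : 0 < x := lt_trans (by linarith) (mem_Ioi.1 hx)
    have hs : HasDerivAt (fun τ => √(2 * τ)) (2 * 1 / (2 * √(2 * x))) x :=
      ((hasDerivAt_id x).const_mul 2).sqrt (by simp; exact hx'.ne')
    have h1 : HasDerivAt (fun τ => y + √(2 * τ) * z) (2 * 1 / (2 * √(2 * x)) * z) x :=
      (hs.mul_const z).const_add y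
    have h2 := ((hf (y + √(2 * x) * z)).comp x h1).mul_const (gk z)
    have hne : √(2 * x) ≠ 0 := (Real.sqrt_pos.2 (by linarith)).ne'
    refine HasDerivAt.congr_deriv h2 ?_
    field_simp

lemma gk_deriv (z : ℝ) : HasDerivAt gk (-(z * gk z)) z := by
  have h : HasDerivAt (fun z : ℝ => -(1 / 2) * z ^ 2) (-(1 / 2) * (2 * z)) z := by
    simpa using (hasDerivAt_pow 2 z).const_mul (-(1 / 2 : ℝ))
  have := (h.exp).const_mul (√(2 * π))⁻¹
  unfold gk
  refine HasDerivAt.congr_deriv this ?_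
  ring

lemma abs_mul_gk_le (z : ℝ) : |z * gk z| ≤ 1 := by
  have h0 := gk_nonneg z
  have h1 : (√(2 * π))⁻¹ ≤ 1 := by
    apply inv_le_one_of_one_le₀
    rw [Real.one_le_sqrt]
    linarith [Real.pi_gt_three]
  have h2 : |z| ≤ Real.exp ((1 / 2) * z ^ 2) := by
    have := Real.add_one_le_exp ((1 / 2) * z ^ 2)
    have h3 : |z| ≤ (1 / 2) * z ^ 2 + 1 := by
      have : z ^ 2 = |z| ^ 2 := by simp
      rw [this]; nlinarith [sq_nonneg (|z| - 1)]
    linarith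
  rw [abs_mul, abs_of_nonneg h0, gk, neg_mul, Real.exp_neg]
  have he := Real.exp_pos ((1 / 2) * z ^ 2)
  calc |z| * ((√(2 * π))⁻¹ * (Real.exp ((1 / 2) * z ^ 2))⁻¹)
      ≤ Real.exp ((1 / 2) * z ^ 2) * (1 * (Real.exp ((1 / 2) * z ^ 2))⁻¹) := by gcongr
    _ = 1 := by field_simp

/-- Smoothing: averaging a merely continuous compactly supported `F` produces a differentiable
function; the derivative falls on the Gaussian. -/
lemma gavg_deriv_smooth {F : ℝ → ℝ} (hF : Continuous F) (hs : HasCompactSupport F) (y : ℝ) {σ : ℝ}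
    (hσ : 0 < σ) :
    HasDerivAt (fun y => gavg F y σ) (∫ z, F (y + σ * z) * (z / σ) * gk z) y := by
  have hgk := gk_cont
  have cv : ∀ (G : ℝ → ℝ) (y : ℝ), ∫ z, G (y + σ * z) = σ⁻¹ * ∫ s, G s := by
    intro G y
    have h1 := Measure.integral_comp_mul_left (fun s => G (y + s)) σ
    simp only [smul_eq_mul] at h1
    rw [h1, integral_add_left_eq_self G y, abs_of_pos (inv_pos.2 hσ)]
  have e1 : ∀ y, gavg F y σ = σ⁻¹ * ∫ s, F s * gk ((s - y) / σ) := by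
    intro y
    rw [← cv (fun s => F s * gk ((s - y) / σ)) y]
    unfold gavg
    congr 1; ext z
    rw [show (y + σ * z - y) / σ = z by field_simp; ring]
  have e2 : ∫ z, F (y + σ * z) * (z / σ) * gk z
      = σ⁻¹ * ∫ s, F s * (((s - y) / σ) * gk ((s - y) / σ) * σ⁻¹) := by
    rw [← cv (fun s => F s * (((s - y) / σ) * gk ((s - y) / σ) * σ⁻¹)) y]
    congr 1; ext z
    rw [show (y + σ * z - y) / σ = z by field_simp; ring]
    ring
  have hFi : Integrable F := hF.integrable_of_hasCompactSupport hs
  rw [e2]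
  have : (fun y => gavg F y σ) = fun y => σ⁻¹ * ∫ s, F s * gk ((s - y) / σ) := funext e1
  rw [this]
  refine HasDerivAt.const_mul _ ?_
  refine (hasDerivAt_integral_of_dominated_loc_of_deriv_le (s := univ)
    (F := fun y s => F s * gk ((s - y) / σ))
    (F' := fun y s => F s * (((s - y) / σ) * gk ((s - y) / σ) * σ⁻¹))
    (bound := fun s => |F s| * σ⁻¹) univ_mem ?_ ?_ ?_ ?_ (hFi.abs.mul_const _) ?_).2
  · exact Eventually.of_forall fun x => Continuous.aestronglyMeasurable (by fun_prop)
  · exact Continuous.integrable_of_hasCompactSupport (by fun_prop) hs.mul_right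
  · exact Continuous.aestronglyMeasurable (by fun_prop)
  · refine ae_of_all _ fun s x _ => ?_
    rw [norm_mul, norm_mul, Real.norm_eq_abs, Real.norm_eq_abs, Real.norm_eq_abs,
      abs_of_pos (inv_pos.2 hσ)]
    have := abs_mul_gk_le ((s - x) / σ)
    have h3 : 0 < σ⁻¹ := inv_pos.2 hσ
    calc |F s| * (|(s - x) / σ * gk ((s - x) / σ)| * σ⁻¹) ≤ |F s| * (1 * σ⁻¹) := by gcongr
      _ = _ := by ring
  · refine ae_of_all _ fun s x _ => ?_
    have h1 : HasDerivAt (fun y => (s - y) / σ) (-1 / σ) x :=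
      ((hasDerivAt_id x).const_sub s).div_const σ
    have h2 := ((gk_deriv ((s - x) / σ)).comp x h1).const_mul (F s)
    refine HasDerivAt.congr_deriv h2 ?_
    field_simp

/-! ### Parabolic maximum principle -/

/-- Weak maximum principle needing only pointwise derivatives. -/
lemma max_principle {z zy zyy zt : ℝ → ℝ → ℝ} {a b h : ℝ}
    (hz : ContinuousOn (fun p : ℝ × ℝ => z p.1 p.2) (Icc a b ×ˢ Icc 0 h))
    (hy : ∀ y ∈ Ioo a b, ∀ τ ∈ Ioc 0 h, HasDerivAt (fun y => z y τ) (zy y τ) y)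
    (hyy : ∀ y ∈ Ioo a b, ∀ τ ∈ Ioc 0 h, HasDerivAt (fun y => zy y τ) (zyy y τ) y)
    (ht : ∀ y ∈ Ioo a b, ∀ τ ∈ Ioc 0 h, HasDerivAt (fun τ => z y τ) (zt y τ) τ)
    (h0 : ∀ y ∈ Icc a b, z y 0 ≤ 0)
    (ha : ∀ τ ∈ Icc 0 h, z a τ ≤ 0) (hb : ∀ τ ∈ Icc 0 h, z b τ ≤ 0)
    (hzt : ∀ y ∈ Ioo a b, ∀ τ ∈ Ioc 0 h, zy y τ = 0 → zyy y τ ≤ 0 → zt y τ < 0) :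
    ∀ y ∈ Icc a b, ∀ τ ∈ Icc 0 h, z y τ ≤ 0 := by
  intro y0 hy0 τ0 hτ0
  obtain ⟨⟨y, τ⟩, ⟨hy1, hτ1⟩, hmax⟩ := (isCompact_Icc.prod isCompact_Icc).exists_isMaxOn
    (s := Icc a b ×ˢ Icc 0 h) ⟨(y0, τ0), hy0, hτ0⟩ hz
  simp only at hy1 hτ1
  have hle : ∀ y' ∈ Icc a b, ∀ τ' ∈ Icc 0 h, z y' τ' ≤ z y τ := fun y' h1 τ' h2 =>
    hmax (⟨h1, h2⟩ : (y', τ') ∈ Icc a b ×ˢ Icc 0 h)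
  refine (hle y0 hy0 τ0 hτ0).trans ?_
  by_contra hpos
  push Not at hpos
  have hya : y ≠ a := by rintro rfl; exact absurd (ha τ hτ1) (not_le.2 hpos)
  have hyb : y ≠ b := by rintro rfl; exact absurd (hb τ hτ1) (not_le.2 hpos)
  have hτ' : τ ≠ 0 := by rintro rfl; exact absurd (h0 y hy1) (not_le.2 hpos)
  have hy2 : y ∈ Ioo a b := ⟨lt_of_le_of_ne hy1.1 hya.symm, lt_of_le_of_ne hy1.2 hyb⟩
  have hτ2 : τ ∈ Ioc 0 h := ⟨lt_of_le_of_ne hτ1.1 hτ'.symm, hτ1.2⟩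
  have hnb : ∀ᶠ y' in 𝓝 y, y' ∈ Ioo a b := Ioo_mem_nhds hy2.1 hy2.2
  have hlm : IsLocalMax (fun y => z y τ) y := by
    filter_upwards [hnb] with y' h' using hle y' (Ioo_subset_Icc_self h') τ hτ1
  have e1 : zy y τ = 0 := hlm.hasDerivAt_eq_zero (hy y hy2 τ hτ2)
  have hder : deriv (fun y => z y τ) =ᶠ[𝓝 y] fun y => zy y τ := by
    filter_upwards [hnb] with y' h' using (hy y' h' τ hτ2).deriv
  have e2 : zyy y τ ≤ 0 := by
    by_contra hp
    push Not at hp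
    have hdd : deriv (deriv (fun y => z y τ)) y = zyy y τ := by
      rw [hder.deriv_eq]; exact (hyy y hy2 τ hτ2).deriv
    have hmin : IsLocalMin (fun y => z y τ) y := isLocalMin_of_deriv_deriv_pos
      (by rw [hdd]; exact hp) (by rw [hder.self_of_nhds]; exact e1)
      (hy y hy2 τ hτ2).continuousAt
    have hconst : (fun y => z y τ) =ᶠ[𝓝 y] fun _ => z y τ := by
      filter_upwards [hlm, hmin] with y' h1 h2 using le_antisymm h1 h2
    have : deriv (deriv (fun y => z y τ)) y = 0 := by rw [hconst.deriv.deriv_eq]; simp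
    linarith
  have e3 := hzt y hy2 τ hτ2 e1 e2
  have hsl := (hasDerivAt_iff_tendsto_slope.1 (ht y hy2 τ hτ2)).eventually (gt_mem_nhds e3)
  have hsl' : ∀ᶠ s in 𝓝[<] τ, slope (fun τ => z y τ) τ s < 0 :=
    hsl.filter_mono (nhdsWithin_mono _ fun s (hs : s < τ) => hs.ne)
  have hin : ∀ᶠ s in 𝓝[<] τ, s ∈ Ioo 0 τ := Ioo_mem_nhdsLT hτ2.1
  obtain ⟨s, hs1, hs2⟩ := (hsl'.and hin).exists
  rw [slope_def_field, div_neg_iff] at hs1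
  have h4 := hle y hy1 s ⟨hs2.1.le, hs2.2.le.trans hτ1.2⟩
  rcases hs1 with h5 | h5
  · linarith [h5.1]
  · linarith [h5.2, hs2.2]

/-! ### Short-time expansion of pointwise solutions -/

/-- `u` solves `u_t = u_yy + b(y,u) u_y + c(y) u` pointwise on `ℝ × (0,∞)`, with `u` jointly
continuous and `uy`, `uyy` its space derivatives.  Nothing is assumed about continuity of the
derivatives jointly in space and time. -/
structure PtSol (b : ℝ → ℝ → ℝ) (c : ℝ → ℝ) (u uy uyy : ℝ → ℝ → ℝ) : Prop where
  hb : Continuous (fun p : ℝ × ℝ => b p.1 p.2)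
  hc : Continuous c
  hu : ContinuousOn (fun p : ℝ × ℝ => u p.1 p.2) (univ ×ˢ Ioi (0:ℝ))
  h1 : ∀ t, 0 < t → ∀ y, HasDerivAt (fun y => u y t) (uy y t) y
  h2 : ∀ t, 0 < t → ∀ y, HasDerivAt (fun y => uy y t) (uyy y t) y
  h3 : ∀ t, 0 < t → ∀ y, HasDerivAt (fun s => u y s)
    (uyy y t + b y (u y t) * uy y t + c y * u y t) t

lemma PtSol.neg {b : ℝ → ℝ → ℝ} {c : ℝ → ℝ} {u uy uyy : ℝ → ℝ → ℝ} (h : PtSol b c u uy uyy) :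
    PtSol (fun y v => b y (-v)) c (fun y t => - u y t) (fun y t => - uy y t)
      (fun y t => - uyy y t) where
  hb := h.hb.comp (by fun_prop : Continuous fun p : ℝ × ℝ => (p.1, -p.2))
  hc := h.hc
  hu := h.hu.neg
  h1 t ht y := (h.h1 t ht y).neg
  h2 t ht y := (h.h2 t ht y).neg
  h3 t ht y := by
    refine HasDerivAt.congr_deriv (h.h3 t ht y).neg ?_
    simp only [neg_neg]; ring

/-- The lower order part `b(y,u) u_y + c u` at time `t`. -/
def lowOrd (b : ℝ → ℝ → ℝ) (c : ℝ → ℝ) (u uy : ℝ → ℝ → ℝ) (t y : ℝ) : ℝ :=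
  b y (u y t) * uy y t + c y * u y t

lemma PtSol.cont_u {b : ℝ → ℝ → ℝ} {c : ℝ → ℝ} {u uy uyy : ℝ → ℝ → ℝ} (h : PtSol b c u uy uyy)
    {t : ℝ} (ht : 0 < t) : Continuous (fun y => u y t) :=
  continuous_iff_continuousAt.2 fun y => (h.h1 t ht y).continuousAt

lemma PtSol.cont_uy {b : ℝ → ℝ → ℝ} {c : ℝ → ℝ} {u uy uyy : ℝ → ℝ → ℝ} (h : PtSol b c u uy uyy)
    {t : ℝ} (ht : 0 < t) : Continuous (fun y => uy y t) :=
  continuous_iff_continuousAt.2 fun y => (h.h2 t ht y).continuousAt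

lemma PtSol.cont_low {b : ℝ → ℝ → ℝ} {c : ℝ → ℝ} {u uy uyy : ℝ → ℝ → ℝ} (h : PtSol b c u uy uyy)
    {t : ℝ} (ht : 0 < t) : Continuous (lowOrd b c u uy t) := by
  have h1 := h.cont_u ht
  have h2 := h.cont_uy ht
  have h3 : Continuous fun y => b y (u y t) :=
    h.hb.comp (by fun_prop : Continuous fun y => (y, u y t))
  have h4 := h.hc
  exact (h3.mul h2).add (h4.mul h1)

/-- One-sided short-time expansion: on `[p,q]`, `u(·,t+τ)` is at most the heat flow of `u(·,t)`
plus `τ` times the lower order terms, up to `o(τ)`.  Comparison with the explicit smooth function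
`heat flow + τ · polynomial + ω ρ`, where `ρ` is a lateral barrier vanishing on `[p,q]`. -/
lemma PtSol.upper_step {b : ℝ → ℝ → ℝ} {c : ℝ → ℝ} {u uy uyy : ℝ → ℝ → ℝ}
    (h : PtSol b c u uy uyy) {t : ℝ} (ht : 0 < t) {p q : ℝ}
    {f f' : ℝ → ℝ} (hf : ∀ y, HasDerivAt f (f' y) y) (hf' : Continuous f')
    (hfs : HasCompactSupport f')
    {C C' : ℝ} (hC : ∀ y, |f y| ≤ C) (hC' : ∀ y, |f' y| ≤ C')
    (hfu : ∀ y ∈ Icc (p - 1) (q + 1), f y = u y t)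
    (hfu' : ∀ y ∈ Icc (p - 1) (q + 1), f' y = uy y t) {η : ℝ} (hη : 0 < η) :
    ∀ᶠ τ in 𝓝[>] (0:ℝ), ∀ y ∈ Icc p q,
      u y (t + τ) - gavg f y (√(2 * τ)) - τ * lowOrd b c u uy t y ≤ η * τ := by
  obtain ⟨k⟩ := exists_cutoff
  have hfc : Continuous f := continuous_iff_continuousAt.2 fun y => (hf y).continuousAt
  -- polynomial approximation of the lower order terms
  obtain ⟨P, hP⟩ := exists_polynomial_near_of_continuousOn (p - 1) (q + 1)
    (lowOrd b c u uy t) (h.cont_low ht).continuousOn (η / 4) (by linarith)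
  -- the lateral barrier
  set ρ : ℝ → ℝ := fun y => 1 - k.S (y - p + 1) * k.S (q + 1 - y) with hρ
  set ρ1 : ℝ → ℝ := fun y =>
    -(k.S1 (y - p + 1) * k.S (q + 1 - y) - k.S (y - p + 1) * k.S1 (q + 1 - y)) with hρ1
  set ρ2 : ℝ → ℝ := fun y =>
    -(k.S2 (y - p + 1) * k.S (q + 1 - y) - 2 * k.S1 (y - p + 1) * k.S1 (q + 1 - y)
      + k.S (y - p + 1) * k.S2 (q + 1 - y)) with hρ2
  have hl : ∀ y, HasDerivAt (fun y : ℝ => y - p + 1) 1 y := fun y =>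
    ((hasDerivAt_id y).sub_const p).add_const 1
  have hr : ∀ y, HasDerivAt (fun y : ℝ => q + 1 - y) (-1) y := fun y =>
    (hasDerivAt_id y).const_sub (q + 1)
  have hρd : ∀ y, HasDerivAt ρ (ρ1 y) y := by
    intro y
    have := (((k.h1 _).comp y (hl y)).mul ((k.h1 _).comp y (hr y))).const_sub 1
    refine HasDerivAt.congr_deriv this ?_
    simp only [hρ1, Function.comp]; ring
  have hρdd : ∀ y, HasDerivAt ρ1 (ρ2 y) y := by
    intro y
    have := ((((k.h2 _).comp y (hl y)).mul ((k.h1 _).comp y (hr y))).sub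
      (((k.h1 _).comp y (hl y)).mul ((k.h2 _).comp y (hr y)))).neg
    refine HasDerivAt.congr_deriv this ?_
    simp only [hρ2, Function.comp]; ring
  have hk0 := k.c0
  have hk1 := k.c1
  have hk2 := k.c2
  have cρ : Continuous ρ := by fun_prop
  have cρ1 : Continuous ρ1 := by fun_prop
  have cρ2 : Continuous ρ2 := by fun_prop
  have hρ0 : ∀ y, 0 ≤ ρ y := fun y => by
    have := mul_le_one₀ (k.le_one (y - p + 1)) (k.nonneg (q + 1 - y)) (k.le_one (q + 1 - y))
    simp only [hρ]; linarith
  have hρi : ∀ y ∈ Icc p q, ρ y = 0 := fun y hy => by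
    simp only [hρ]
    rw [k.one _ (by linarith [hy.1]), k.one _ (by linarith [hy.2])]; norm_num
  have hρl : ρ (p - 1) = 1 := by simp only [hρ]; rw [k.zero _ (by linarith)]; norm_num
  have hρr : ρ (q + 1) = 1 := by simp only [hρ]; rw [k.zero (q + 1 - (q + 1)) (by linarith)]; norm_num
  -- the barrier amplitude
  have cbu : Continuous fun y => b y (u y t) :=
    h.hb.comp ((continuous_id.prodMk (h.cont_u ht)) : Continuous fun y => (y, u y t))
  obtain ⟨A, hA⟩ := isCompact_Icc.exists_bound_of_continuousOn (s := Icc (p - 1) (q + 1))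
    (f := fun y => b y (u y t) * ρ1 y + ρ2 y) ((cbu.mul cρ1).add cρ2).continuousOn
  obtain ⟨ω, hω, hωA⟩ : ∃ ω > 0, ω * A ≤ η / 4 := by
    refine ⟨η / 4 / (|A| + 1), by positivity, ?_⟩
    rw [div_mul_eq_mul_div, div_le_iff₀ (by positivity)]
    have := le_abs_self A
    nlinarith
  -- space-time continuity of the pieces near `τ = 0`
  have cu : ∀ y, ContinuousAt (fun r : ℝ × ℝ => u r.2 (t + r.1)) ((0:ℝ), y) := by
    intro y
    have h1 : ContinuousAt (fun p : ℝ × ℝ => u p.1 p.2) (y, t + 0) :=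
      h.hu.continuousAt (prod_mem_nhds univ_mem (Ioi_mem_nhds (by simpa using ht)))
    have h2 : ContinuousAt (fun r : ℝ × ℝ => (r.2, t + r.1)) ((0:ℝ), y) := by fun_prop
    exact ContinuousAt.comp (f := fun r : ℝ × ℝ => (r.2, t + r.1)) (x := ((0:ℝ), y)) h1 h2
  have cv : Continuous (fun r : ℝ × ℝ => gavg f r.2 (√(2 * r.1))) :=
    (gavg_cont hfc hC).comp (by fun_prop : Continuous fun r : ℝ × ℝ => (r.2, √(2 * r.1)))
  have cv' : Continuous (fun r : ℝ × ℝ => gavg f' r.2 (√(2 * r.1))) :=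
    (gavg_cont hf' hC').comp (by fun_prop : Continuous fun r : ℝ × ℝ => (r.2, √(2 * r.1)))
  have cP : Continuous (fun y => P.eval y) := P.continuous
  have cP1 : Continuous (fun y => P.derivative.eval y) := P.derivative.continuous
  have cP2 : Continuous (fun y => P.derivative.derivative.eval y) := P.derivative.derivative.continuous
  have evE : ∀ᶠ τ in 𝓝 (0:ℝ), ∀ y ∈ Icc (p - 1) (q + 1),
      b y (u y (t + τ)) * (gavg f' y (√(2 * τ)) + τ * P.derivative.eval y + ω * ρ1 y)
        + c y * u y (t + τ) + τ * P.derivative.derivative.eval y + ω * ρ2 y - P.eval y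
        < 3 / 4 * η := by
    refine isCompact_Icc.eventually_forall_of_forall_eventually fun y hy => ?_
    have cb : ContinuousAt (fun r : ℝ × ℝ => b r.2 (u r.2 (t + r.1))) ((0:ℝ), y) :=
      ContinuousAt.comp (g := fun p : ℝ × ℝ => b p.1 p.2)
        (f := fun r : ℝ × ℝ => (r.2, u r.2 (t + r.1))) (x := ((0:ℝ), y))
        h.hb.continuousAt (continuousAt_snd.prodMk (cu y))
    have cE : ContinuousAt (fun r : ℝ × ℝ => b r.2 (u r.2 (t + r.1)) *
        (gavg f' r.2 (√(2 * r.1)) + r.1 * P.derivative.eval r.2 + ω * ρ1 r.2)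
        + c r.2 * u r.2 (t + r.1) + r.1 * P.derivative.derivative.eval r.2 + ω * ρ2 r.2
        - P.eval r.2) ((0:ℝ), y) := by
      have hcc := h.hc
      have q1 : Continuous fun r : ℝ × ℝ =>
          gavg f' r.2 (√(2 * r.1)) + r.1 * P.derivative.eval r.2 + ω * ρ1 r.2 :=
        (cv'.add (continuous_fst.mul (cP1.comp continuous_snd))).add
          (continuous_const.mul (cρ1.comp continuous_snd))
      have q2 : Continuous fun r : ℝ × ℝ => r.1 * P.derivative.derivative.eval r.2 :=
        continuous_fst.mul (cP2.comp continuous_snd)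
      exact ((((cb.mul q1.continuousAt).add
        ((hcc.comp continuous_snd).continuousAt.mul (cu y))).add q2.continuousAt).add
        (continuous_const.mul (cρ2.comp continuous_snd)).continuousAt).sub
        (cP.comp continuous_snd).continuousAt
    refine cE.eventually (gt_mem_nhds ?_)
    have e1 := hP y hy
    have e2 := hA y hy
    rw [Real.norm_eq_abs] at e2
    simp only [mul_zero, Real.sqrt_zero, gavg_zero, add_zero, zero_mul]
    rw [hfu' y hy]
    rw [abs_lt] at e1
    have e3 : ω * (b y (u y t) * ρ1 y + ρ2 y) ≤ η / 4 :=
      (mul_le_mul_of_nonneg_left ((le_abs_self _).trans e2) hω.le).trans hωA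
    unfold lowOrd at e1
    nlinarith [e1.1]
  have evD : ∀ᶠ τ in 𝓝 (0:ℝ), ∀ y ∈ Icc (p - 1) (q + 1),
      u y (t + τ) - gavg f y (√(2 * τ)) - τ * P.eval y < ω := by
    refine isCompact_Icc.eventually_forall_of_forall_eventually fun y hy => ?_
    have cD : ContinuousAt (fun r : ℝ × ℝ => u r.2 (t + r.1) - gavg f r.2 (√(2 * r.1))
        - r.1 * P.eval r.2) ((0:ℝ), y) :=
      ((cu y).sub cv.continuousAt).sub
        (continuous_fst.mul (cP.comp continuous_snd)).continuousAt
    refine cD.eventually (gt_mem_nhds ?_)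
    simp only [mul_zero, Real.sqrt_zero, gavg_zero, add_zero, zero_mul]
    rw [hfu y hy]; linarith
  obtain ⟨h0, hh0, hball⟩ := Metric.eventually_nhds_iff.1 (evE.and evD)
  have hev : ∀ᶠ τ in 𝓝[>] (0:ℝ), τ ∈ Ioo 0 h0 := Ioo_mem_nhdsGT hh0
  filter_upwards [hev] with τ hτ y hy
  have hin : ∀ s ∈ Icc 0 τ, dist s 0 < h0 := fun s hs => by
    rw [Real.dist_eq, sub_zero, abs_of_nonneg hs.1]; linarith [hs.2, hτ.2]
  have hpq : p ≤ q := hy.1.trans hy.2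
  have main := max_principle (a := p - 1) (b := q + 1) (h := τ)
    (z := fun y s => u y (t + s) - gavg f y (√(2 * s)) - s * P.eval y - ω * ρ y - 3 / 4 * η * s)
    (zy := fun y s => uy y (t + s) - gavg f' y (√(2 * s)) - s * P.derivative.eval y - ω * ρ1 y)
    (zyy := fun y s => uyy y (t + s) - (∫ z, f' (y + √(2 * s) * z) * (z / √(2 * s)) * gk z)
      - s * P.derivative.derivative.eval y - ω * ρ2 y)
    (zt := fun y s => (uyy y (t + s) + b y (u y (t + s)) * uy y (t + s) + c y * u y (t + s))
      - (∫ z, f' (y + √(2 * s) * z) * (z / √(2 * s)) * gk z) - P.eval y - 3 / 4 * η)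
    ?_ ?_ ?_ ?_ ?_ ?_ ?_ ?_ y ⟨by linarith [hy.1], by linarith [hy.2]⟩ τ ⟨hτ.1.le, le_rfl⟩
  · have e1 := hP y ⟨by linarith [hy.1], by linarith [hy.2]⟩
    rw [abs_lt] at e1
    simp only [hρi y hy] at main
    nlinarith [e1.2, hτ.1]
  · have c1 : ContinuousOn (fun r : ℝ × ℝ => u r.1 (t + r.2)) (Icc (p - 1) (q + 1) ×ˢ Icc 0 τ) :=
      h.hu.comp (f := fun r : ℝ × ℝ => (r.1, t + r.2)) (by fun_prop)
        (fun r hr => ⟨mem_univ _, by have := hr.2.1; simp only [mem_Ioi]; linarith⟩)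
    have c2 : Continuous (fun r : ℝ × ℝ => gavg f r.1 (√(2 * r.2))) :=
      (gavg_cont hfc hC).comp (by fun_prop : Continuous fun r : ℝ × ℝ => (r.1, √(2 * r.2)))
    have c3 : Continuous (fun r : ℝ × ℝ => r.2 * P.eval r.1) :=
      continuous_snd.mul (cP.comp continuous_fst)
    exact (((c1.sub c2.continuousOn).sub c3.continuousOn).sub
      (continuous_const.mul (cρ.comp continuous_fst)).continuousOn).sub
      (by fun_prop)
  · intro y _ s hs
    exact (((h.h1 (t + s) (by linarith [hs.1]) y).sub (gavg_deriv hf hf' hC hC' y _)).sub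
      ((P.hasDerivAt y).const_mul s)).sub ((hρd y).const_mul ω) |>.sub_const (3 / 4 * η * s)
  · intro y _ s hs
    exact (((h.h2 (t + s) (by linarith [hs.1]) y).sub
      (gavg_deriv_smooth hf' hfs y (Real.sqrt_pos.2 (by linarith [hs.1])))).sub
      ((P.derivative.hasDerivAt y).const_mul s)).sub ((hρdd y).const_mul ω)
  · intro y _ s hs
    have q1 := (h.h3 (t + s) (by linarith [hs.1]) y).comp_const_add t s
    have q2 := ((((q1.sub (gavg_deriv_time hf hf' hC hC' y hs.1)).sub
      ((hasDerivAt_id s).mul_const (P.eval y))).sub_const (ω * ρ y)).sub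
      ((hasDerivAt_id s).const_mul (3 / 4 * η)))
    refine HasDerivAt.congr_deriv q2 ?_
    ring
  · intro y hy
    simp only [mul_zero, Real.sqrt_zero, gavg_zero, add_zero, zero_mul]
    rw [hfu y hy]
    have := mul_nonneg hω.le (hρ0 y)
    linarith
  · intro s hs
    have := (hball (hin s hs)).2 (p - 1) ⟨le_rfl, by linarith⟩
    rw [hρl]
    have := mul_nonneg hη.le hs.1
    linarith
  · intro s hs
    have := (hball (hin s hs)).2 (q + 1) ⟨by linarith, le_rfl⟩
    rw [hρr]
    have := mul_nonneg hη.le hs.1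
    linarith
  · intro y hy s hs e1 e2
    have e3 := (hball (hin s ⟨hs.1.le, hs.2⟩)).1 y (Ioo_subset_Icc_self hy)
    have e4 : uy y (t + s) = gavg f' y (√(2 * s)) + s * P.derivative.eval y + ω * ρ1 y := by
      linarith
    simp only [e4]
    linarith

/-- Derivative of the Gaussian average, with the derivative moved onto the Gaussian. -/
noncomputable def gder (F : ℝ → ℝ) (y σ : ℝ) : ℝ := ∫ z, F (y + σ * z) * (z / σ) * gk z

lemma gder_cont {F : ℝ → ℝ} (hF : Continuous F) {C : ℝ} (hC : ∀ y, |F y| ≤ C) {σ : ℝ}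
    (hσ : 0 < σ) : Continuous (fun y => gder F y σ) := by
  have := gk_cont
  unfold gder
  refine continuous_of_dominated (bound := fun z => C / σ * (|z| * gk z)) ?_ ?_
    (abs_gk_int.const_mul _) ?_
  · exact fun y => Continuous.aestronglyMeasurable (by fun_prop)
  · refine fun y => ae_of_all _ fun z => ?_
    rw [norm_mul, norm_mul, norm_div, Real.norm_eq_abs, Real.norm_eq_abs, Real.norm_eq_abs,
      Real.norm_eq_abs, abs_of_nonneg (gk_nonneg z), abs_of_pos hσ]
    calc |F (y + σ * z)| * (|z| / σ) * gk z ≤ C * (|z| / σ) * gk z := by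
          have := gk_nonneg z
          have := hC (y + σ * z)
          gcongr
      _ = _ := by ring
  · exact ae_of_all _ fun z => by fun_prop

lemma gder_bound {F : ℝ → ℝ} {C : ℝ} (hC : ∀ y, |F y| ≤ C) {σ : ℝ}
    (hσ : 0 < σ) (y : ℝ) : |gder F y σ| ≤ C / σ * ∫ z, |z| * gk z := by
  have hi : Integrable (fun z => C / σ * (|z| * gk z)) := abs_gk_int.const_mul _
  rw [← integral_const_mul, ← Real.norm_eq_abs]
  unfold gder
  refine norm_integral_le_of_norm_le hi (ae_of_all _ fun z => ?_)
  rw [norm_mul, norm_mul, norm_div, Real.norm_eq_abs, Real.norm_eq_abs, Real.norm_eq_abs,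
    Real.norm_eq_abs, abs_of_nonneg (gk_nonneg z), abs_of_pos hσ]
  calc |F (y + σ * z)| * (|z| / σ) * gk z ≤ C * (|z| / σ) * gk z := by
        have := gk_nonneg z
        have := hC (y + σ * z)
        gcongr
    _ = _ := by ring

/-- Testing the heat flow of a `C¹` function against `θ`: the right derivative at time `0`. -/
lemma heat_test_deriv {f f' : ℝ → ℝ} (hf : ∀ y, HasDerivAt f (f' y) y) (hf' : Continuous f')
    (hfs : HasCompactSupport f')
    {C C' : ℝ} (hC : ∀ y, |f y| ≤ C) (hC' : ∀ y, |f' y| ≤ C')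
    {θ θ1 : ℝ → ℝ} (hθ : ∀ y, HasDerivAt θ (θ1 y) y) (hθ1 : Continuous θ1) {p q : ℝ}
    (hp : θ p = 0) (hq : θ q = 0) :
    HasDerivWithinAt (fun τ => ∫ y in p..q, θ y * gavg f y (√(2 * τ)))
      (-∫ y in p..q, θ1 y * f' y) (Ici 0) 0 := by
  have hfc : Continuous f := continuous_iff_continuousAt.2 fun y => (hf y).continuousAt
  have hθc : Continuous θ := continuous_iff_continuousAt.2 fun y => (hθ y).continuousAt
  have cv : Continuous (fun r : ℝ × ℝ => gavg f r.2 (√(2 * r.1))) :=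
    (gavg_cont hfc hC).comp (by fun_prop : Continuous fun r : ℝ × ℝ => (r.2, √(2 * r.1)))
  have cv' : Continuous (fun r : ℝ × ℝ => gavg f' r.2 (√(2 * r.1))) :=
    (gavg_cont hf' hC').comp (by fun_prop : Continuous fun r : ℝ × ℝ => (r.2, √(2 * r.1)))
  have cvy : ∀ σ, Continuous (fun y => gavg f y σ) := fun σ =>
    (gavg_cont hfc hC).comp (by fun_prop : Continuous fun y : ℝ => (y, σ))
  have cvy' : ∀ σ, Continuous (fun y => gavg f' y σ) := fun σ =>
    (gavg_cont hf' hC').comp (by fun_prop : Continuous fun y : ℝ => (y, σ))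
  have cV : Continuous (fun τ => ∫ y in p..q, θ y * gavg f y (√(2 * τ))) :=
    intervalIntegral.continuous_parametric_intervalIntegral_of_continuous'
      (f := fun τ y => θ y * gavg f y (√(2 * τ)))
      ((hθc.comp continuous_snd).mul cv) p q
  have cV' : Continuous (fun τ => ∫ y in p..q, θ1 y * gavg f' y (√(2 * τ))) :=
    intervalIntegral.continuous_parametric_intervalIntegral_of_continuous'
      (f := fun τ y => θ1 y * gavg f' y (√(2 * τ)))
      ((hθ1.comp continuous_snd).mul cv') p q
  have hd : ∀ τ, 0 < τ → HasDerivAt (fun τ => ∫ y in p..q, θ y * gavg f y (√(2 * τ)))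
      (-∫ y in p..q, θ1 y * gavg f' y (√(2 * τ))) τ := by
    intro τ hτ
    have hσ : 0 < √(2 * τ) := Real.sqrt_pos.2 (by linarith)
    have cg := gder_cont hf' hC' hσ
    have hK : 0 ≤ ∫ z, |z| * gk z := integral_nonneg fun z => mul_nonneg (abs_nonneg z) (gk_nonneg z)
    have hC0 : 0 ≤ C' := (abs_nonneg _).trans (hC' 0)
    have main := (intervalIntegral.hasDerivAt_integral_of_dominated_loc_of_deriv_le
      (μ := volume) (a := p) (b := q) (s := Ioi (τ / 2)) (x₀ := τ)
      (F := fun τ y => θ y * gavg f y (√(2 * τ)))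
      (F' := fun τ y => θ y * gder f' y (√(2 * τ)))
      (bound := fun y => |θ y| * (C' / √τ * ∫ z, |z| * gk z)) (Ioi_mem_nhds (by linarith))
      (Eventually.of_forall fun x => (hθc.mul (cvy _)).aestronglyMeasurable)
      ((hθc.mul (cvy _)).intervalIntegrable _ _)
      (hθc.mul cg).aestronglyMeasurable
      (ae_of_all _ fun y _ s hs => ?_)
      ((hθc.abs.mul continuous_const).intervalIntegrable _ _)
      (ae_of_all _ fun y _ s hs => ?_)).2
    · refine main.congr_deriv ?_
      have hder : ∀ y, HasDerivAt (fun y => θ y * gavg f' y (√(2 * τ)))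
          (θ1 y * gavg f' y (√(2 * τ)) + θ y * gder f' y (√(2 * τ))) y :=
        fun y => (hθ y).mul (gavg_deriv_smooth hf' hfs y hσ)
      have i1 : IntervalIntegrable (fun y => θ1 y * gavg f' y (√(2 * τ))) volume p q :=
        (hθ1.mul (cvy' _)).intervalIntegrable _ _
      have i2 : IntervalIntegrable (fun y => θ y * gder f' y (√(2 * τ))) volume p q :=
        (hθc.mul cg).intervalIntegrable _ _
      have hI : ∫ y in p..q, (θ1 y * gavg f' y (√(2 * τ)) + θ y * gder f' y (√(2 * τ))) = 0 := by
        rw [intervalIntegral.integral_eq_sub_of_hasDerivAt (fun y _ => hder y) (i1.add i2), hp, hq]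
        simp
      rw [intervalIntegral.integral_add i1 i2] at hI
      linarith
    · have hs' : τ / 2 < s := hs
      have h1 : √τ ≤ √(2 * s) := Real.sqrt_le_sqrt (by linarith)
      have h2 : 0 < √τ := Real.sqrt_pos.2 hτ
      rw [norm_mul, Real.norm_eq_abs, Real.norm_eq_abs]
      refine mul_le_mul_of_nonneg_left ?_ (abs_nonneg _)
      refine (gder_bound hC' (h2.trans_le h1) y).trans ?_
      gcongr
    · have hs' : 0 < s := lt_trans (by linarith) (mem_Ioi.1 hs)
      exact (gavg_deriv_time hf hf' hC hC' y hs').const_mul (θ y)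
  refine hasDerivWithinAt_Ici_of_tendsto_deriv (s := Ioi 0)
    (fun τ hτ => (hd τ hτ).differentiableAt.differentiableWithinAt)
    cV.continuousWithinAt self_mem_nhdsWithin ?_
  have h1 : Tendsto (fun τ => -∫ y in p..q, θ1 y * gavg f' y (√(2 * τ))) (𝓝[>] 0)
      (𝓝 (-∫ y in p..q, θ1 y * f' y)) := by
    have := (cV'.tendsto 0).mono_left (nhdsWithin_le_nhds (s := Ioi 0))
    simp only [mul_zero, Real.sqrt_zero, gavg_zero] at this
    exact this.neg
  refine h1.congr' ?_
  filter_upwards [self_mem_nhdsWithin] with τ hτ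
  exact (hd τ hτ).deriv.symm

/-- Weak form of the equation at a fixed time, as a right derivative. -/
lemma PtSol.weak_right {b : ℝ → ℝ → ℝ} {c : ℝ → ℝ} {u uy uyy : ℝ → ℝ → ℝ}
    (h : PtSol b c u uy uyy) {t : ℝ} (ht : 0 < t) {p q : ℝ} (hpq : p ≤ q)
    {θ θ1 : ℝ → ℝ} (hθ : ∀ y, HasDerivAt θ (θ1 y) y) (hθ1 : Continuous θ1)
    (hp : θ p = 0) (hq : θ q = 0) :
    HasDerivWithinAt (fun s => ∫ y in p..q, θ y * u y s)
      (∫ y in p..q, (-(θ1 y * uy y t) + θ y * lowOrd b c u uy t y)) (Ioi t) t := by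
  obtain ⟨k⟩ := exists_cutoff
  have hθc : Continuous θ := continuous_iff_continuousAt.2 fun y => (hθ y).continuousAt
  have cu := h.cont_u ht
  have cuy := h.cont_uy ht
  have clow := h.cont_low ht
  have hk0 := k.c0
  have hk1 := k.c1
  -- a compactly supported `C¹` function agreeing with `u(·,t)` on `[p-1,q+1]`
  set κ : ℝ → ℝ := fun y => k.S (y - (p - 2)) * k.S (q + 2 - y) with hκ
  set κ1 : ℝ → ℝ := fun y => k.S1 (y - (p - 2)) * k.S (q + 2 - y)
    - k.S (y - (p - 2)) * k.S1 (q + 2 - y) with hκ1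
  have hκd : ∀ y, HasDerivAt κ (κ1 y) y := by
    intro y
    have hl : HasDerivAt (fun y : ℝ => y - (p - 2)) 1 y := (hasDerivAt_id y).sub_const _
    have hr : HasDerivAt (fun y : ℝ => q + 2 - y) (-1) y := (hasDerivAt_id y).const_sub _
    refine HasDerivAt.congr_deriv (((k.h1 _).comp y hl).mul ((k.h1 _).comp y hr)) ?_
    simp only [hκ1, Function.comp]; ring
  have cκ : Continuous κ := by fun_prop
  have cκ1 : Continuous κ1 := by fun_prop
  have hκin : ∀ y ∈ Icc (p - 1) (q + 1), κ y = 1 ∧ κ1 y = 0 := by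
    intro y hy
    simp only [hκ, hκ1]
    rw [k.one _ (by linarith [hy.1]), k.one _ (by linarith [hy.2]),
      k.S1_zero' _ (by linarith [hy.1]), k.S1_zero' _ (by linarith [hy.2])]
    norm_num
  have hκout : ∀ y, y ∉ Icc (p - 2) (q + 2) → κ y = 0 ∧ κ1 y = 0 := by
    intro y hy
    rw [mem_Icc, not_and_or, not_le, not_le] at hy
    simp only [hκ, hκ1]
    rcases hy with hy | hy
    · rw [k.zero (y - (p - 2)) (by linarith), k.S1_zero (y - (p - 2)) (by linarith)]; norm_num
    · rw [k.zero (q + 2 - y) (by linarith), k.S1_zero (q + 2 - y) (by linarith)]; norm_num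
  set f : ℝ → ℝ := fun y => κ y * u y t with hfdef
  set f' : ℝ → ℝ := fun y => κ1 y * u y t + κ y * uy y t with hf'def
  have hf : ∀ y, HasDerivAt f (f' y) y := fun y => (hκd y).mul (h.h1 t ht y)
  have cf : Continuous f := cκ.mul cu
  have cf' : Continuous f' := (cκ1.mul cu).add (cκ.mul cuy)
  have sf : HasCompactSupport f := HasCompactSupport.intro isCompact_Icc fun y hy => by
    simp only [hfdef]; rw [(hκout y hy).1]; ring
  have sf' : HasCompactSupport f' := HasCompactSupport.intro isCompact_Icc fun y hy => by
    simp only [hf'def]; rw [(hκout y hy).1, (hκout y hy).2]; ring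
  obtain ⟨C, hC⟩ := cf.bounded_above_of_compact_support sf
  obtain ⟨C', hC'⟩ := cf'.bounded_above_of_compact_support sf'
  simp only [Real.norm_eq_abs] at hC hC'
  have hfu : ∀ y ∈ Icc (p - 1) (q + 1), f y = u y t := fun y hy => by
    simp only [hfdef]; rw [(hκin y hy).1]; ring
  have hfu' : ∀ y ∈ Icc (p - 1) (q + 1), f' y = uy y t := fun y hy => by
    simp only [hf'def]; rw [(hκin y hy).1, (hκin y hy).2]; ring
  have hsub : ∀ y ∈ Icc p q, y ∈ Icc (p - 1) (q + 1) := fun y hy =>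
    ⟨by linarith [hy.1], by linarith [hy.2]⟩
  -- two-sided expansion
  have hexp : ∀ η > 0, ∀ᶠ τ in 𝓝[>] (0:ℝ), ∀ y ∈ Icc p q,
      |u y (t + τ) - gavg f y (√(2 * τ)) - τ * lowOrd b c u uy t y| ≤ η * τ := by
    intro η hη
    have up := h.upper_step ht (p := p) (q := q) hf cf' sf' hC hC' hfu hfu' hη
    have lo := h.neg.upper_step ht (p := p) (q := q) (f := fun y => - f y) (f' := fun y => - f' y)
      (fun y => (hf y).neg) cf'.neg (by
        refine HasCompactSupport.intro (K := Icc (p - 2) (q + 2)) isCompact_Icc fun y hy => ?_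
        simp only [hf'def]; rw [(hκout y hy).1, (hκout y hy).2]; ring) (C := C) (C' := C')
      (fun y => by rw [abs_neg]; exact hC y) (fun y => by rw [abs_neg]; exact hC' y)
      (fun y hy => by rw [hfu y hy]) (fun y hy => by rw [hfu' y hy]) hη
    filter_upwards [up, lo] with τ h1 h2 y hy
    have e1 := h1 y hy
    have e2 := h2 y hy
    have e3 : gavg (fun y => - f y) y (√(2 * τ)) = - gavg f y (√(2 * τ)) := by
      unfold gavg; rw [← integral_neg]; congr 1; ext z; ring
    have e4 : lowOrd (fun y v => b y (-v)) c (fun y t => - u y t) (fun y t => - uy y t) t y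
        = - lowOrd b c u uy t y := by
      simp only [lowOrd, neg_neg]; ring
    rw [e3, e4] at e2
    rw [abs_le]; constructor <;> linarith
  obtain ⟨B, hB⟩ := isCompact_Icc.exists_bound_of_continuousOn (s := Icc p q) hθc.continuousOn
  have hB0 : 0 ≤ B := (norm_nonneg _).trans (hB p ⟨le_rfl, hpq⟩)
  set L := ∫ y in p..q, θ y * lowOrd b c u uy t y with hL
  set V : ℝ → ℝ := fun τ => ∫ y in p..q, θ y * gavg f y (√(2 * τ)) with hV
  have cvy : ∀ σ, Continuous (fun y => gavg f y σ) := fun σ =>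
    (gavg_cont cf hC).comp (by fun_prop : Continuous fun y : ℝ => (y, σ))
  have hV0 : V 0 = ∫ y in p..q, θ y * u y t := by
    simp only [hV, mul_zero, Real.sqrt_zero, gavg_zero]
    refine intervalIntegral.integral_congr fun y hy => ?_
    rw [uIcc_of_le hpq] at hy
    simp only [hfu y (hsub y hy)]
  have hVd := (heat_test_deriv hf cf' sf' hC hC' hθ hθ1 hp hq).mono Ioi_subset_Ici_self
  have hE : HasDerivWithinAt (fun τ => (∫ y in p..q, θ y * u y (t + τ)) - V τ - τ * L) 0
      (Ioi 0) 0 := by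
    rw [hasDerivWithinAt_iff_isLittleO, Asymptotics.isLittleO_iff]
    intro ε hε
    have hη : 0 < ε / (B * (q - p) + 1) := by
      have : 0 ≤ q - p := by linarith
      positivity
    filter_upwards [hexp _ hη, self_mem_nhdsWithin] with τ h1 hτ
    have hτ' : 0 < τ := hτ
    have e0 : (∫ y in p..q, θ y * u y (t + 0)) - V 0 - 0 * L = 0 := by rw [hV0]; simp
    have cut := h.cont_u (t := t + τ) (by linarith)
    have e1 : (∫ y in p..q, θ y * u y (t + τ)) - V τ - τ * L
        = ∫ y in p..q, θ y * (u y (t + τ) - gavg f y (√(2 * τ)) - τ * lowOrd b c u uy t y) := by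
      have i1 : IntervalIntegrable (fun y => θ y * u y (t + τ)) volume p q :=
        (hθc.mul cut).intervalIntegrable _ _
      have i2 : IntervalIntegrable (fun y => θ y * gavg f y (√(2 * τ))) volume p q :=
        (hθc.mul (cvy _)).intervalIntegrable _ _
      have i3 : IntervalIntegrable (fun y => τ * (θ y * lowOrd b c u uy t y)) volume p q :=
        (continuous_const.mul (hθc.mul clow)).intervalIntegrable _ _
      have i4 : IntervalIntegrable
        (fun y => θ y * u y (t + τ) - θ y * gavg f y (√(2 * τ))) volume p q := i1.sub i2
      simp only [hL, hV]
      rw [← intervalIntegral.integral_const_mul, ← intervalIntegral.integral_sub i1 i2,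
        ← intervalIntegral.integral_sub i4 i3]
      congr 1; ext y; ring
    rw [e0, e1]
    simp only [sub_zero, smul_zero]
    have e2 : ‖∫ y in p..q, θ y * (u y (t + τ) - gavg f y (√(2 * τ)) - τ * lowOrd b c u uy t y)‖
        ≤ (B * (ε / (B * (q - p) + 1) * τ)) * |q - p| := by
      refine intervalIntegral.norm_integral_le_of_norm_le_const fun y hy => ?_
      rw [uIoc_of_le hpq] at hy
      have hy' := Ioc_subset_Icc_self hy
      rw [norm_mul]
      exact mul_le_mul (hB y hy') (h1 y hy') (norm_nonneg _) hB0
    refine e2.trans ?_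
    rw [abs_of_nonneg (by linarith : 0 ≤ q - p), Real.norm_eq_abs, abs_of_pos hτ']
    have hqp : 0 ≤ B * (q - p) := mul_nonneg hB0 (by linarith)
    calc B * (ε / (B * (q - p) + 1) * τ) * (q - p)
        = ε * τ * (B * (q - p) / (B * (q - p) + 1)) := by ring
      _ ≤ ε * τ * 1 := by
          gcongr
          rw [div_le_one (by linarith)]; linarith
      _ = ε * τ := by ring
  have hG : HasDerivWithinAt (fun τ => ∫ y in p..q, θ y * u y (t + τ))
      (-(∫ y in p..q, θ1 y * f' y) + L) (Ioi 0) 0 := by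
    have := (hE.add hVd).add (((hasDerivAt_id (0:ℝ)).mul_const L).hasDerivWithinAt (s := Ioi 0))
    refine (this.congr_deriv (by ring)).congr (fun τ _ => ?_) ?_
    · simp only [Pi.add_apply, id]; ring
    · simp only [Pi.add_apply, id]; ring
  have hS : HasDerivWithinAt (fun s : ℝ => s - t) 1 (Ioi t) t :=
    ((hasDerivAt_id t).sub_const t).hasDerivWithinAt
  have hG' : HasDerivWithinAt (fun τ => ∫ y in p..q, θ y * u y (t + τ))
      (-(∫ y in p..q, θ1 y * f' y) + L) (Ioi 0) (t - t) := by rw [sub_self]; exact hG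
  have hcomp := HasDerivWithinAt.comp (h := fun s : ℝ => s - t) t hG' hS
    (fun s (hs : t < s) => by simpa using hs)
  have hval : (-(∫ y in p..q, θ1 y * f' y) + L) * 1
      = ∫ y in p..q, (-(θ1 y * uy y t) + θ y * lowOrd b c u uy t y) := by
    have i1 : IntervalIntegrable (fun y => -(θ1 y * uy y t)) volume p q :=
      (hθ1.mul cuy).neg.intervalIntegrable _ _
    have i2 : IntervalIntegrable (fun y => θ y * lowOrd b c u uy t y) volume p q :=
      (hθc.mul clow).intervalIntegrable _ _
    rw [mul_one, intervalIntegral.integral_add i1 i2, intervalIntegral.integral_neg]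
    congr 2
    refine intervalIntegral.integral_congr fun y hy => ?_
    rw [uIcc_of_le hpq] at hy
    simp only [hfu' y (hsub y hy)]
  refine (hcomp.congr_deriv hval).congr (fun s _ => ?_) ?_
  · simp [Function.comp]
  · simp [Function.comp]

/-! ### The equation in logarithmic variables, tested on an interval -/

/-- Solutions `m(y,t) = n(e^y,t)` of the Kompaneets equation in the variable `y = log x`, bounded
by `M`, with the decay at `y → ∞` of the original problem and vanishing boundary value at
`y → -∞`. -/
structure KS (m my myy : ℝ → ℝ → ℝ) (M : ℝ) : Prop where
  sol : PtSol (fun y v => exp y - 1 + 2 * exp (-y) * v) (fun y => 2 * exp y - 2) m my myy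
  nn : ∀ y t, 0 < t → 0 ≤ m y t
  le : ∀ y t, 0 < t → m y t ≤ M
  dec : ∀ T, 0 < T → ∃ C, ∀ y t, 0 < t → t < T → exp (2 * y) * m y t ≤ C
  top : ∀ t, 0 < t → Tendsto (fun y => exp (2 * y) * m y t) atTop (𝓝 0)
  bot : ∀ t, 0 < t → Tendsto (fun y => m y t) atBot (𝓝 0)

/-- Integrand on the right of the weak form of the equation tested against `φ(y) e^y`, where
`φ1 = φ'` and `φ2 = φ''`. -/
noncomputable def kG (φ1 φ2 : ℝ → ℝ) (y v : ℝ) : ℝ :=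
  exp y * (φ2 y + (3 - exp y) * φ1 y) * v - φ1 y * v ^ 2

lemma cont_param {m : ℝ → ℝ → ℝ}
    (hm : ContinuousOn (fun p : ℝ × ℝ => m p.1 p.2) (univ ×ˢ Ioi (0:ℝ)))
    {g : ℝ → ℝ → ℝ} (hg : Continuous (fun r : ℝ × ℝ => g r.1 r.2)) {t1 : ℝ} (h1 : 0 < t1)
    (p q : ℝ) : ContinuousOn (fun t => ∫ y in p..q, g y (m y t)) (Ici t1) := by
  have hcm : Continuous (fun r : ℝ × ℝ => m r.2 (max r.1 t1)) := by
    have : Continuous (fun r : ℝ × ℝ => (r.2, max r.1 t1)) := by fun_prop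
    exact hm.comp_continuous this fun r => ⟨mem_univ _, lt_of_lt_of_le h1 (le_max_right _ _)⟩
  have hc : Continuous (fun t => ∫ y in p..q, g y (m y (max t t1))) :=
    intervalIntegral.continuous_parametric_intervalIntegral_of_continuous'
      (f := fun t y => g y (m y (max t t1)))
      (hg.comp (continuous_snd.prodMk hcm)) p q
  refine hc.continuousOn.congr fun t ht => ?_
  simp only [max_eq_left (mem_Ici.1 ht)]

/-- Weak form on an interval, for test functions vanishing at the endpoints together with their
first derivatives. -/
lemma KS.weak_interval {m my myy : ℝ → ℝ → ℝ} {M : ℝ} (h : KS m my myy M)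
    {φ φ1 φ2 : ℝ → ℝ} (hφ : ∀ y, HasDerivAt φ (φ1 y) y) (hφ1 : ∀ y, HasDerivAt φ1 (φ2 y) y)
    (hφ2 : Continuous φ2) {p q : ℝ} (hpq : p ≤ q) (hp : φ p = 0) (hq : φ q = 0)
    (hp1 : φ1 p = 0) (hq1 : φ1 q = 0) {t1 t2 : ℝ} (ht1 : 0 < t1) (ht : t1 ≤ t2) :
    IntervalIntegrable (fun t => ∫ y in p..q, kG φ1 φ2 y (m y t)) volume t1 t2 ∧
    ∫ t in t1..t2, ∫ y in p..q, kG φ1 φ2 y (m y t)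
      = (∫ y in p..q, φ y * exp y * m y t2) - ∫ y in p..q, φ y * exp y * m y t1 := by
  have c0 : Continuous φ := continuous_iff_continuousAt.2 fun y => (hφ y).continuousAt
  have c1 : Continuous φ1 := continuous_iff_continuousAt.2 fun y => (hφ1 y).continuousAt
  have hgc : Continuous (fun r : ℝ × ℝ => kG φ1 φ2 r.1 r.2) := by unfold kG; fun_prop
  have hgc' : Continuous (fun r : ℝ × ℝ => φ r.1 * exp r.1 * r.2) := by fun_prop
  have cR := cont_param h.sol.hu hgc ht1 p q
  have cF := cont_param (g := fun y v => φ y * exp y * v) h.sol.hu hgc' ht1 p q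
  have iR : IntervalIntegrable (fun t => ∫ y in p..q, kG φ1 φ2 y (m y t)) volume t1 t2 :=
    ContinuousOn.intervalIntegrable_of_Icc ht (cR.mono Icc_subset_Ici_self)
  refine ⟨iR, ?_⟩
  refine intervalIntegral.integral_eq_sub_of_hasDeriv_right_of_le ht
    (cF.mono Icc_subset_Ici_self) (fun t htt => ?_) iR
  have ht0 : 0 < t := ht1.trans htt.1
  set θ1 : ℝ → ℝ := fun y => φ1 y * exp y + φ y * exp y with hθ1
  have hθ : ∀ y, HasDerivAt (fun y => φ y * exp y) (θ1 y) y := fun y =>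
    (hφ y).mul (Real.hasDerivAt_exp y)
  have cθ1 : Continuous θ1 := by fun_prop
  have key := h.sol.weak_right ht0 hpq hθ cθ1 (by simp [hp]) (by simp [hq])
  refine key.congr_deriv ?_
  have cm := h.sol.cont_u ht0
  have cmy := h.sol.cont_uy ht0
  have clow := h.sol.cont_low ht0
  -- the two integrands differ by the derivative of a function vanishing at `p` and `q`
  set LHS : ℝ → ℝ := fun y => -(θ1 y * my y t) + φ y * exp y *
    lowOrd (fun y v => exp y - 1 + 2 * exp (-y) * v) (fun y => 2 * exp y - 2) m my t y with hLHS
  set RHS : ℝ → ℝ := fun y => kG φ1 φ2 y (m y t) with hRHS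
  have cL : Continuous LHS := by fun_prop
  have cRR : Continuous RHS := hgc.comp (continuous_id.prodMk cm)
  have hW : ∀ y, HasDerivAt (fun y => φ1 y * exp y * m y t
      + (2 * exp y - exp y ^ 2) * φ y * m y t - φ y * m y t ^ 2) (RHS y - LHS y) y := by
    intro y
    have hm := h.sol.h1 t ht0 y
    have he := Real.hasDerivAt_exp y
    have := ((((hφ1 y).mul he).mul hm).add ((((he.const_mul 2).sub (he.pow 2)).mul
      (hφ y)).mul hm)).sub ((hφ y).mul (hm.pow 2))
    refine HasDerivAt.congr_deriv this ?_
    simp only [hLHS, hRHS, kG, lowOrd, hθ1, Real.exp_neg, Pi.mul_apply, Pi.sub_apply, Pi.pow_apply]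
    field_simp
    ring
  have hI := intervalIntegral.integral_eq_sub_of_hasDerivAt (a := p) (b := q) (fun y _ => hW y)
    ((cRR.sub cL).intervalIntegrable _ _)
  rw [intervalIntegral.integral_sub (cRR.intervalIntegrable _ _) (cL.intervalIntegrable _ _),
    hp, hq, hp1, hq1] at hI
  simp only [zero_mul, mul_zero] at hI
  linarith

/-! ### The weak form on the whole line -/

lemma int_expabs : Integrable (fun y : ℝ => exp (-|y|)) := by
  rw [← integrableOn_univ, ← Iic_union_Ioi (a := (0:ℝ))]
  refine IntegrableOn.union ?_ ?_
  · refine (integrableOn_exp_Iic 0).congr_fun (fun y hy => ?_) measurableSet_Iic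
    simp only [abs_of_nonpos (mem_Iic.1 hy), neg_neg]
  · refine (integrableOn_exp_neg_Ioi 0).congr_fun (fun y hy => ?_) measurableSet_Ioi
    simp only [abs_of_pos (mem_Ioi.1 hy)]

lemma KS.dom {m my myy : ℝ → ℝ → ℝ} {M : ℝ} (h : KS m my myy M) {T : ℝ} (hT : 0 < T) :
    ∃ D, 0 ≤ D ∧ ∀ y t, 0 < t → t < T → exp y * m y t ≤ D * exp (-|y|) := by
  obtain ⟨C, hC⟩ := h.dec T hT
  refine ⟨max (max M C) 0, le_max_right _ _, fun y t ht htT => ?_⟩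
  rcases le_total y 0 with hy | hy
  · rw [abs_of_nonpos hy, neg_neg, mul_comm]
    have := (h.le y t ht).trans ((le_max_left M C).trans (le_max_left _ 0))
    exact mul_le_mul_of_nonneg_right this (exp_pos y).le
  · rw [abs_of_nonneg hy]
    have := (hC y t ht htT).trans ((le_max_right M C).trans (le_max_left _ 0))
    calc exp y * m y t = exp (2 * y) * m y t * exp (-y) := by
          rw [show 2 * y = y + y by ring, exp_add, exp_neg]; field_simp
      _ ≤ _ := mul_le_mul_of_nonneg_right this (exp_pos _).le

/-- Integrability at a fixed time and continuity in time of whole-line integrals whose integrand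
is controlled by the photon density `e^y m`. -/
lemma KS.cont_whole {m my myy : ℝ → ℝ → ℝ} {M : ℝ} (h : KS m my myy M) {g : ℝ → ℝ → ℝ}
    (hg : Continuous (fun r : ℝ × ℝ => g r.1 r.2)) {K : ℝ} (hK0 : 0 ≤ K)
    (hK : ∀ y v, 0 ≤ v → v ≤ M → |g y v| ≤ K * (exp y * v)) :
    (∀ t, 0 < t → Integrable (fun y => g y (m y t))) ∧
    ∀ t, 0 < t → ContinuousAt (fun t => ∫ y, g y (m y t)) t := by
  have hmeas : ∀ t, 0 < t → Continuous (fun y => g y (m y t)) := fun t ht =>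
    hg.comp (continuous_id.prodMk (h.sol.cont_u ht))
  have hbd : ∀ T, 0 < T → ∃ D, ∀ y t, 0 < t → t < T → ‖g y (m y t)‖ ≤ K * (D * exp (-|y|)) := by
    intro T hT
    obtain ⟨D, -, hD⟩ := h.dom hT
    exact ⟨D, fun y t ht htT => (hK y _ (h.nn y t ht) (h.le y t ht)).trans
      (mul_le_mul_of_nonneg_left (hD y t ht htT) hK0)⟩
  constructor
  · intro t ht
    obtain ⟨D, hD⟩ := hbd (t + 1) (by linarith)
    exact ((int_expabs.const_mul D).const_mul K).mono' (hmeas t ht).aestronglyMeasurable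
      (ae_of_all _ fun y => hD y t ht (by linarith))
  · intro t ht
    obtain ⟨D, hD⟩ := hbd (t + 1) (by linarith)
    refine continuousAt_of_dominated (bound := fun y => K * (D * exp (-|y|))) ?_ ?_
      ((int_expabs.const_mul D).const_mul K) ?_
    · filter_upwards [Ioi_mem_nhds ht] with s hs
      exact (hmeas s hs).aestronglyMeasurable
    · filter_upwards [Ioo_mem_nhds ht (by linarith : t < t + 1)] with s hs
      exact ae_of_all _ fun y => hD y s hs.1 hs.2
    · refine ae_of_all _ fun y => ?_
      have h1 : ContinuousAt (fun s => m y s) t := (h.sol.h3 t ht y).continuousAt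
      exact ContinuousAt.comp (x := t) (f := fun s => (y, m y s)) hg.continuousAt
        (continuousAt_const.prodMk h1)

/-- Admissible test functions for the whole-line weak form: `φ` is bounded and `C²`, constant near
`-∞`, with `φ' = O(e^{-y})` at `+∞`. -/
structure Tst (φ φ1 φ2 : ℝ → ℝ) (C L : ℝ) : Prop where
  d1 : ∀ y, HasDerivAt φ (φ1 y) y
  d2 : ∀ y, HasDerivAt φ1 (φ2 y) y
  c2 : Continuous φ2
  b0 : ∀ y, |φ y| ≤ C
  b1 : ∀ y, |exp y * φ1 y| ≤ C
  b2 : ∀ y, |φ2 y| ≤ C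
  z : ∀ y, y ≤ -L → φ1 y = 0

namespace Tst
variable {φ φ1 φ2 : ℝ → ℝ} {C L : ℝ}

lemma C0 (h : Tst φ φ1 φ2 C L) : 0 ≤ C := (abs_nonneg _).trans (h.b0 0)

lemma cc0 (h : Tst φ φ1 φ2 C L) : Continuous φ :=
  continuous_iff_continuousAt.2 fun y => (h.d1 y).continuousAt

lemma cc1 (h : Tst φ φ1 φ2 C L) : Continuous φ1 :=
  continuous_iff_continuousAt.2 fun y => (h.d2 y).continuousAt

lemma b1' (h : Tst φ φ1 φ2 C L) (y : ℝ) : |φ1 y| ≤ C * exp L := by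
  have hC := h.C0
  rcases le_total y (-L) with hy | hy
  · rw [h.z y hy, abs_zero]; positivity
  · have h1 := h.b1 y
    rw [abs_mul, abs_of_pos (exp_pos y)] at h1
    have h2 : 1 ≤ exp y * exp L := by rw [← exp_add]; exact one_le_exp (by linarith)
    calc |φ1 y| ≤ |φ1 y| * (exp y * exp L) := le_mul_of_one_le_right (abs_nonneg _) h2
      _ = exp y * |φ1 y| * exp L := by ring
      _ ≤ _ := mul_le_mul_of_nonneg_right h1 (exp_pos L).le

lemma b1'' (h : Tst φ φ1 φ2 C L) (y : ℝ) : |φ1 y| ≤ C * exp L * exp L * exp y := by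
  have hC := h.C0
  rcases le_total y (-L) with hy | hy
  · rw [h.z y hy, abs_zero]; positivity
  · have h1 := h.b1' y
    have h2 : 1 ≤ exp L * exp y := by rw [← exp_add]; exact one_le_exp (by linarith)
    calc |φ1 y| ≤ C * exp L := h1
      _ ≤ C * exp L * (exp L * exp y) := le_mul_of_one_le_right (by positivity) h2
      _ = _ := by ring

lemma kG_cont (h : Tst φ φ1 φ2 C L) : Continuous (fun r : ℝ × ℝ => kG φ1 φ2 r.1 r.2) := by
  have := h.cc1
  have := h.c2
  unfold kG; fun_prop

lemma kG_bound (h : Tst φ φ1 φ2 C L) {M : ℝ} (y v : ℝ) (hv : 0 ≤ v) (hvM : v ≤ M) :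
    |kG φ1 φ2 y v| ≤ (C + 3 * (C * exp L) + C + C * exp L * exp L * M) * (exp y * v) := by
  have hC := h.C0
  have hM : 0 ≤ M := hv.trans hvM
  have e1 : |exp y * φ2 y * v| ≤ C * (exp y * v) := by
    rw [abs_mul, abs_mul, abs_of_pos (exp_pos y), abs_of_nonneg hv]
    have := h.b2 y
    nlinarith [mul_nonneg (exp_pos y).le hv]
  have e2 : |exp y * φ1 y * v| ≤ C * exp L * (exp y * v) := by
    rw [abs_mul, abs_mul, abs_of_pos (exp_pos y), abs_of_nonneg hv]
    have := h.b1' y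
    nlinarith [mul_nonneg (exp_pos y).le hv]
  have e3 : |exp y * φ1 y * (exp y * v)| ≤ C * (exp y * v) := by
    rw [abs_mul, abs_of_nonneg (mul_nonneg (exp_pos y).le hv)]
    exact mul_le_mul_of_nonneg_right (h.b1 y) (mul_nonneg (exp_pos y).le hv)
  have e4 : |φ1 y * v ^ 2| ≤ C * exp L * exp L * M * (exp y * v) := by
    rw [abs_mul, abs_of_nonneg (sq_nonneg v)]
    calc |φ1 y| * v ^ 2 ≤ (C * exp L * exp L * exp y) * (M * v) := by
          have := h.b1'' y
          rw [sq]
          gcongr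
      _ = _ := by ring
  have : kG φ1 φ2 y v = exp y * φ2 y * v + 3 * (exp y * φ1 y * v) - exp y * φ1 y * (exp y * v)
      - φ1 y * v ^ 2 := by unfold kG; ring
  rw [this]
  rw [abs_le] at *
  constructor <;> nlinarith

end Tst

lemma Cutoff.S1_int (k : Cutoff) : Integrable k.S1 := by
  refine k.c1.integrable_of_hasCompactSupport
    (HasCompactSupport.intro (K := Icc 0 1) isCompact_Icc fun y hy => ?_)
  rw [mem_Icc, not_and_or, not_le, not_le] at hy
  rcases hy with hy | hy
  · exact k.S1_zero y hy.le
  · exact k.S1_zero' y hy.le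

lemma Cutoff.mul_S1_int (k : Cutoff) {f : ℝ → ℝ} (hf : Continuous f) {B : ℝ}
    (hB : ∀ y, |f y| ≤ B) (a : ℝ) : Integrable (fun y => f y * k.S1 (y + a)) :=
  (k.S1_int.comp_add_right a).bdd_mul hf.aestronglyMeasurable (ae_of_all _ hB)

lemma Cutoff.mul_S1_le (k : Cutoff) {f : ℝ → ℝ} {B : ℝ}
    (hB : ∀ y, |f y| ≤ B) (a : ℝ) : |∫ y, f y * k.S1 (y + a)| ≤ B * ∫ y, k.S1 y := by
  rw [← integral_add_right_eq_self k.S1 a, ← integral_const_mul, ← Real.norm_eq_abs]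
  refine norm_integral_le_of_norm_le ((k.S1_int.comp_add_right a).const_mul B)
    (ae_of_all _ fun y => ?_)
  rw [norm_mul, Real.norm_eq_abs, Real.norm_eq_abs, abs_of_nonneg (k.S1_nonneg _)]
  exact mul_le_mul_of_nonneg_right (hB y) (k.S1_nonneg _)

lemma Cutoff.mul_S1_tendsto (k : Cutoff) {f : ℝ → ℝ} (hf : Continuous f) {B : ℝ}
    (hB : ∀ y, |f y| ≤ B) (h0 : Tendsto f atBot (𝓝 0)) :
    Tendsto (fun j : ℕ => ∫ y, f y * k.S1 (y + j)) atTop (𝓝 0) := by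
  have e : ∀ j : ℕ, ∫ y, f y * k.S1 (y + j) = ∫ y, f (y - j) * k.S1 y := fun j => by
    rw [← integral_add_right_eq_self (fun y => f (y - j) * k.S1 y) (j:ℝ)]
    simp
  simp only [e]
  have := k.c1
  have := tendsto_integral_filter_of_dominated_convergence (l := atTop)
    (F := fun (j : ℕ) y => f (y - j) * k.S1 y) (f := fun _ => (0:ℝ)) (μ := volume)
    (fun y => B * k.S1 y)
    (Eventually.of_forall fun j => Continuous.aestronglyMeasurable (by fun_prop))
    (Eventually.of_forall fun j => ae_of_all _ fun y => by
      rw [norm_mul, Real.norm_eq_abs, Real.norm_eq_abs, abs_of_nonneg (k.S1_nonneg _)]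
      exact mul_le_mul_of_nonneg_right (hB _) (k.S1_nonneg _))
    (k.S1_int.const_mul B)
    (ae_of_all _ fun y => by
      have h1 : Tendsto (fun j : ℕ => y - (j:ℝ)) atTop atBot := by
        have : Tendsto (fun j : ℕ => y + -(j:ℝ)) atTop atBot :=
          tendsto_atBot_add_const_left _ _ (tendsto_neg_atTop_atBot.comp tendsto_natCast_atTop_atTop)
        simpa [sub_eq_add_neg] using this
      simpa using (h0.comp h1).mul_const (k.S1 y))
  simpa using this

namespace Cutoff

/-- Two-sided cutoff, equal to `1` on `[-j+1,j-1]` and vanishing off `[-j,j]` when `j ≥ 1`. -/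
noncomputable def K0 (k : Cutoff) (j y : ℝ) : ℝ := k.S (y + j) + k.S (-y + j) - 1
/-- Derivative of `K0`. -/
noncomputable def K1 (k : Cutoff) (j y : ℝ) : ℝ := k.S1 (y + j) - k.S1 (-y + j)
/-- Second derivative of `K0`. -/
noncomputable def K2 (k : Cutoff) (j y : ℝ) : ℝ := k.S2 (y + j) + k.S2 (-y + j)

variable (k : Cutoff)

lemma K0_deriv (j y : ℝ) : HasDerivAt (k.K0 j) (k.K1 j y) y := by
  have hl : HasDerivAt (fun y : ℝ => y + j) 1 y := (hasDerivAt_id y).add_const _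
  have hr : HasDerivAt (fun y : ℝ => -y + j) (-1) y := (hasDerivAt_id y).neg.add_const _
  refine HasDerivAt.congr_deriv
    ((((k.h1 _).comp y hl).add ((k.h1 _).comp y hr)).sub_const 1) ?_
  simp only [K1]; ring

lemma K1_deriv (j y : ℝ) : HasDerivAt (k.K1 j) (k.K2 j y) y := by
  have hl : HasDerivAt (fun y : ℝ => y + j) 1 y := (hasDerivAt_id y).add_const _
  have hr : HasDerivAt (fun y : ℝ => -y + j) (-1) y := (hasDerivAt_id y).neg.add_const _
  refine HasDerivAt.congr_deriv (((k.h2 _).comp y hl).sub ((k.h2 _).comp y hr)) ?_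
  simp only [K2]; ring

lemma K0_cont (j : ℝ) : Continuous (k.K0 j) :=
  continuous_iff_continuousAt.2 fun y => (k.K0_deriv j y).continuousAt
lemma K1_cont (j : ℝ) : Continuous (k.K1 j) :=
  continuous_iff_continuousAt.2 fun y => (k.K1_deriv j y).continuousAt
lemma K2_cont (j : ℝ) : Continuous (k.K2 j) := by
  have := k.c2
  unfold K2; fun_prop

lemma K0_abs (j y : ℝ) : |k.K0 j y| ≤ 1 := by
  have := k.nonneg (y + j)
  have := k.nonneg (-y + j)
  have := k.le_one (y + j)
  have := k.le_one (-y + j)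
  unfold K0
  rw [abs_le]; constructor <;> linarith

lemma K1_abs (j y : ℝ) : |k.K1 j y| ≤ k.C := by
  have := k.S1_nonneg (y + j)
  have := k.S1_nonneg (-y + j)
  have := k.S1_le (y + j)
  have := k.S1_le (-y + j)
  unfold K1
  rw [abs_le]; constructor <;> linarith

lemma K2_abs (j y : ℝ) : |k.K2 j y| ≤ 2 * k.C := by
  have := k.S2_le (y + j)
  have := k.S2_le (-y + j)
  unfold K2
  exact (abs_add_le _ _).trans (by linarith)

lemma K_out {j y : ℝ} (hj : 1 ≤ j) (hy : y ∉ Ioo (-j) j) :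
    k.K0 j y = 0 ∧ k.K1 j y = 0 ∧ k.K2 j y = 0 := by
  unfold K0 K1 K2
  rw [mem_Ioo, not_and_or, not_lt, not_lt] at hy
  rcases hy with hy | hy
  · rw [k.zero (y + j) (by linarith), k.one (-y + j) (by linarith), k.S1_zero (y + j) (by linarith),
      k.S1_zero' (-y + j) (by linarith), k.S2_zero (y + j) (by linarith),
      k.S2_zero' (-y + j) (by linarith)]; norm_num
  · rw [k.zero (-y + j) (by linarith), k.one (y + j) (by linarith),
      k.S1_zero (-y + j) (by linarith),
      k.S1_zero' (y + j) (by linarith), k.S2_zero (-y + j) (by linarith),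
      k.S2_zero' (y + j) (by linarith)]; norm_num

lemma K_in {j y : ℝ} (hj : |y| + 1 ≤ j) : k.K0 j y = 1 ∧ k.K1 j y = 0 ∧ k.K2 j y = 0 := by
  unfold K0 K1 K2
  have h1 := neg_abs_le y
  have h2 := le_abs_self y
  rw [k.one (y + j) (by linarith), k.one (-y + j) (by linarith),
    k.S1_zero' (y + j) (by linarith), k.S1_zero' (-y + j) (by linarith),
    k.S2_zero' (y + j) (by linarith), k.S2_zero' (-y + j) (by linarith)]
  norm_num

end Cutoff

lemma eventually_nat_ge (r : ℝ) : ∀ᶠ j : ℕ in atTop, r ≤ (j:ℝ) :=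
  tendsto_natCast_atTop_atTop.eventually_ge_atTop r

section
variable {φ φ1 φ2 : ℝ → ℝ} {C L : ℝ}

/-- Convergence of the right-hand side of the weak form as the two-sided cutoff is removed, with a
bound uniform in the cutoff.  The terms `φ κ' (e^{2y} v + v²)` are not dominated; they vanish because
`e^{2y} v + v²` tends to `0` at both ends. -/
lemma kG_cut_tendsto (k : Cutoff) (h : Tst φ φ1 φ2 C L) {v : ℝ → ℝ} {M D E : ℝ}
    (hv : Continuous v) (v0 : ∀ y, 0 ≤ v y) (vM : ∀ y, v y ≤ M)
    (vD : ∀ y, exp y * v y ≤ D * exp (-|y|)) (vE : ∀ y, exp (2 * y) * v y ≤ E)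
    (vtop : Tendsto (fun y => exp (2 * y) * v y) atTop (𝓝 0)) (vbot : Tendsto v atBot (𝓝 0)) :
    (∀ j : ℕ, 1 ≤ j → |∫ y in (-(j:ℝ))..j, kG (fun y => φ1 y * k.K0 j y + φ y * k.K1 j y)
      (fun y => φ2 y * k.K0 j y + 2 * (φ1 y * k.K1 j y) + φ y * k.K2 j y) y (v y)|
      ≤ (C + 3 * (C * exp L) + C + C * exp L * exp L * M +
          (2 * (C * exp L * k.C) + C * (2 * k.C) + 3 * (C * k.C))) * (D * ∫ y, exp (-|y|))
        + 2 * (C * (E + M ^ 2) * ∫ y, k.S1 y)) ∧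
    Tendsto (fun j : ℕ => ∫ y in (-(j:ℝ))..j, kG (fun y => φ1 y * k.K0 j y + φ y * k.K1 j y)
      (fun y => φ2 y * k.K0 j y + 2 * (φ1 y * k.K1 j y) + φ y * k.K2 j y) y (v y)) atTop
      (𝓝 (∫ y, kG φ1 φ2 y (v y))) := by
  have hC := h.C0
  have hkC := k.hC
  have cφ := h.cc0
  have cφ1 := h.cc1
  have cφ2 := h.c2
  have hM : 0 ≤ M := (v0 0).trans (vM 0)
  set K := C + 3 * (C * exp L) + C + C * exp L * exp L * M +
          (2 * (C * exp L * k.C) + C * (2 * k.C) + 3 * (C * k.C)) with hK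
  have hK0 : 0 ≤ K := by positivity
  set A : ℕ → ℝ → ℝ := fun j y => k.K0 j y * kG φ1 φ2 y (v y)
    + exp y * (2 * (φ1 y * k.K1 j y) + φ y * k.K2 j y + 3 * (φ y * k.K1 j y)) * v y with hA
  set f : ℝ → ℝ := fun y => φ y * (exp (2 * y) * v y + v y ^ 2) with hf
  have cf : Continuous f := by fun_prop
  have ckG : Continuous (fun y => kG φ1 φ2 y (v y)) := h.kG_cont.comp (continuous_id.prodMk hv)
  have cA : ∀ j, Continuous (A j) := fun j => by
    have := k.K0_cont j
    have := k.K1_cont j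
    have := k.K2_cont j
    fun_prop
  have hfB : ∀ y, |f y| ≤ C * (E + M ^ 2) := by
    intro y
    have h1 : 0 ≤ exp (2 * y) * v y := mul_nonneg (exp_pos _).le (v0 y)
    have h2 : v y ^ 2 ≤ M ^ 2 := pow_le_pow_left₀ (v0 y) (vM y) 2
    simp only [hf]
    rw [abs_mul, abs_of_nonneg (add_nonneg h1 (sq_nonneg _))]
    exact mul_le_mul (h.b0 y) (add_le_add (vE y) h2) (add_nonneg h1 (sq_nonneg _)) hC
  have hAB : ∀ j y, ‖A j y‖ ≤ K * (D * exp (-|y|)) := by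
    intro j y
    have e0 : 0 ≤ exp y * v y := mul_nonneg (exp_pos _).le (v0 y)
    have e1 : ‖A j y‖ ≤ K * (exp y * v y) := by
      have a1 := h.kG_bound y (v y) (v0 y) (vM y)
      have a2 : |k.K0 j y * kG φ1 φ2 y (v y)|
          ≤ 1 * ((C + 3 * (C * exp L) + C + C * exp L * exp L * M) * (exp y * v y)) := by
        rw [abs_mul]
        exact mul_le_mul (k.K0_abs _ _) a1 (abs_nonneg _) zero_le_one
      have a3 : |2 * (φ1 y * k.K1 j y) + φ y * k.K2 j y + 3 * (φ y * k.K1 j y)|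
          ≤ 2 * (C * exp L * k.C) + C * (2 * k.C) + 3 * (C * k.C) := by
        have b1 : |φ1 y * k.K1 j y| ≤ C * exp L * k.C := by
          rw [abs_mul]; exact mul_le_mul (h.b1' y) (k.K1_abs _ _) (abs_nonneg _) (by positivity)
        have b2 : |φ y * k.K2 j y| ≤ C * (2 * k.C) := by
          rw [abs_mul]; exact mul_le_mul (h.b0 y) (k.K2_abs _ _) (abs_nonneg _) (by positivity)
        have b3 : |φ y * k.K1 j y| ≤ C * k.C := by
          rw [abs_mul]; exact mul_le_mul (h.b0 y) (k.K1_abs _ _) (abs_nonneg _) (by positivity)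
        rw [abs_le] at *
        constructor <;> linarith
      have a4 : |exp y * (2 * (φ1 y * k.K1 j y) + φ y * k.K2 j y + 3 * (φ y * k.K1 j y)) * v y|
          ≤ (2 * (C * exp L * k.C) + C * (2 * k.C) + 3 * (C * k.C)) * (exp y * v y) := by
        rw [mul_right_comm, abs_mul, abs_of_nonneg e0, mul_comm]
        exact mul_le_mul_of_nonneg_right a3 e0
      rw [Real.norm_eq_abs]
      refine (abs_add_le _ _).trans ((add_le_add a2 a4).trans (le_of_eq ?_))
      rw [hK]; ring
    exact e1.trans (mul_le_mul_of_nonneg_left (vD y) hK0)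
  have iA : ∀ j, Integrable (A j) := fun j =>
    ((int_expabs.const_mul D).const_mul K).mono' (cA j).aestronglyMeasurable (ae_of_all _ (hAB j))
  have i1 : ∀ j : ℕ, Integrable (fun y => f y * k.S1 (y + j)) := fun j => k.mul_S1_int cf hfB j
  have cfn : Continuous (fun y => f (-y)) := cf.comp continuous_neg
  have i2 : ∀ j : ℕ, Integrable (fun y => f y * k.S1 (-y + j)) := fun j => by
    simpa using (k.mul_S1_int cfn (fun y => hfB (-y)) j).comp_neg
  have hsplit : ∀ j : ℕ, 1 ≤ j →
      ∫ y in (-(j:ℝ))..j, kG (fun y => φ1 y * k.K0 j y + φ y * k.K1 j y)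
      (fun y => φ2 y * k.K0 j y + 2 * (φ1 y * k.K1 j y) + φ y * k.K2 j y) y (v y)
      = (∫ y, A j y) - ((∫ y, f y * k.S1 (y + j)) - ∫ y, f (-y) * k.S1 (y + j)) := by
    intro j hj
    have hj' : (1:ℝ) ≤ j := by exact_mod_cast hj
    rw [intervalIntegral.integral_eq_integral_of_support_subset]
    · have e1 : ∫ y, f (-y) * k.S1 (y + j) = ∫ y, f y * k.S1 (-y + j) := by
        rw [← integral_neg_eq_self (fun y => f y * k.S1 (-y + j))]
        simp
      have i3 : Integrable (fun y => f y * k.S1 (y + j) - f y * k.S1 (-y + j)) :=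
        (i1 j).sub (i2 j)
      rw [e1, ← integral_sub (i1 j) (i2 j), ← integral_sub (iA j) i3]
      congr 1; ext y
      simp only [hA, hf, kG, Pi.sub_apply, Cutoff.K1, show 2 * y = y + y by ring, exp_add]
      ring
    · intro y hy
      by_contra hcon
      have : y ∉ Ioo (-(j:ℝ)) j := fun hh => hcon (Ioo_subset_Ioc_self hh)
      obtain ⟨z0, z1, z2⟩ := k.K_out hj' this
      apply hy
      simp only [kG, z0, z1, z2]; ring
  constructor
  · intro j hj
    rw [hsplit j hj]
    have e1 : |∫ y, A j y| ≤ K * (D * ∫ y, exp (-|y|)) := by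
      rw [← integral_const_mul, ← integral_const_mul, ← Real.norm_eq_abs]
      exact norm_integral_le_of_norm_le ((int_expabs.const_mul D).const_mul K)
        (ae_of_all _ (hAB j))
    have e2 := k.mul_S1_le hfB j
    have e3 := k.mul_S1_le (fun y => hfB (-y)) j
    rw [abs_le] at *
    constructor <;> linarith
  · have t1 : Tendsto (fun j => ∫ y, A j y) atTop (𝓝 (∫ y, kG φ1 φ2 y (v y))) := by
      refine tendsto_integral_of_dominated_convergence (fun y => K * (D * exp (-|y|)))
        (fun j => (cA j).aestronglyMeasurable) ((int_expabs.const_mul D).const_mul K)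
        (fun j => ae_of_all _ (hAB j)) (ae_of_all _ fun y => ?_)
      refine tendsto_const_nhds.congr' ?_
      filter_upwards [eventually_nat_ge (|y| + 1)] with j hj
      obtain ⟨z0, z1, z2⟩ := k.K_in hj
      simp only [hA, z0, z1, z2]; ring
    have f0 : ∀ {l : Filter ℝ}, Tendsto (fun y => exp (2 * y) * v y) l (𝓝 0) → Tendsto v l (𝓝 0) →
        Tendsto f l (𝓝 0) := by
      intro l l1 l2
      have l3 : Tendsto (fun y => exp (2 * y) * v y + v y ^ 2) l (𝓝 0) := by
        simpa using l1.add (l2.pow 2)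
      have l4 : Tendsto (fun y => C * |exp (2 * y) * v y + v y ^ 2|) l (𝓝 0) := by
        simpa using l3.abs.const_mul C
      refine squeeze_zero_norm (fun y => ?_) l4
      rw [norm_mul]
      exact mul_le_mul_of_nonneg_right (h.b0 y) (abs_nonneg _)
    have b1 : Tendsto (fun y => exp (2 * y) * v y) atBot (𝓝 0) := by
      have : Tendsto (fun y : ℝ => exp (2 * y)) atBot (𝓝 0) :=
        Real.tendsto_exp_atBot.comp (tendsto_id.const_mul_atBot (by norm_num))
      simpa using this.mul vbot
    have b2 : Tendsto v atTop (𝓝 0) := by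
      refine squeeze_zero' (Eventually.of_forall v0) ?_ vtop
      filter_upwards [eventually_ge_atTop 0] with y hy
      exact le_mul_of_one_le_left (v0 y) (one_le_exp (by linarith))
    have t2 := k.mul_S1_tendsto cf hfB (f0 b1 vbot)
    have t3 := k.mul_S1_tendsto cfn (fun y => hfB (-y)) ((f0 vtop b2).comp tendsto_neg_atBot_atTop)
    have t4 := t1.sub (t2.sub t3)
    simp only [sub_zero] at t4
    refine t4.congr' ?_
    filter_upwards [eventually_ge_atTop 1] with j hj
    exact (hsplit j hj).symm

lemma phi_cut_tendsto (k : Cutoff) (h : Tst φ φ1 φ2 C L) {v : ℝ → ℝ} {D : ℝ}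
    (hv : Continuous v) (v0 : ∀ y, 0 ≤ v y)
    (vD : ∀ y, exp y * v y ≤ D * exp (-|y|)) :
    Tendsto (fun j : ℕ => ∫ y in (-(j:ℝ))..j, φ y * k.K0 j y * exp y * v y) atTop
      (𝓝 (∫ y, φ y * exp y * v y)) := by
  have cφ := h.cc0
  have t1 : Tendsto (fun j : ℕ => ∫ y, φ y * k.K0 j y * exp y * v y) atTop
      (𝓝 (∫ y, φ y * exp y * v y)) := by
    refine tendsto_integral_of_dominated_convergence (fun y => C * (D * exp (-|y|)))
      (fun j => ?_) ((int_expabs.const_mul D).const_mul C)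
      (fun j => ae_of_all _ fun y => ?_) (ae_of_all _ fun y => ?_)
    · have := k.K0_cont j
      exact Continuous.aestronglyMeasurable (by fun_prop)
    · have e0 : 0 ≤ exp y * v y := mul_nonneg (exp_pos _).le (v0 y)
      rw [mul_assoc, norm_mul, Real.norm_eq_abs, Real.norm_eq_abs, abs_of_nonneg e0, abs_mul]
      refine mul_le_mul ?_ (vD y) e0 h.C0
      calc |φ y| * |k.K0 j y| ≤ C * 1 :=
            mul_le_mul (h.b0 y) (k.K0_abs _ _) (abs_nonneg _) h.C0
        _ = C := mul_one C
    · refine tendsto_const_nhds.congr' ?_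
      filter_upwards [eventually_nat_ge (|y| + 1)] with j hj
      rw [(k.K_in hj).1, mul_one]
  refine t1.congr' ?_
  filter_upwards [eventually_ge_atTop 1] with j hj
  have hj' : (1:ℝ) ≤ j := by exact_mod_cast hj
  rw [intervalIntegral.integral_eq_integral_of_support_subset]
  intro y hy
  by_contra hcon
  have : y ∉ Ioo (-(j:ℝ)) j := fun hh => hcon (Ioo_subset_Ioc_self hh)
  apply hy
  simp only [(k.K_out hj' this).1]; ring

/-- Weak form of the equation on the whole line. No boundary term appears at `-∞` because `m → 0`
there. -/
lemma KS.weak {m my myy : ℝ → ℝ → ℝ} {M : ℝ} (hm : KS m my myy M) (h : Tst φ φ1 φ2 C L)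
    {t1 t2 : ℝ} (ht1 : 0 < t1) (ht : t1 ≤ t2) :
    ∫ t in t1..t2, ∫ y, kG φ1 φ2 y (m y t)
      = (∫ y, φ y * exp y * m y t2) - ∫ y, φ y * exp y * m y t1 := by
  obtain ⟨k⟩ := exists_cutoff
  have hT : 0 < t2 + 1 := by linarith
  obtain ⟨D, -, hD⟩ := hm.dom hT
  obtain ⟨E, hE⟩ := hm.dec _ hT
  have cφ2 := h.c2
  have cφ1 := h.cc1
  have cφ := h.cc0
  have key : ∀ t, 0 < t → t < t2 + 1 → _ := fun t h0 h2 =>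
    kG_cut_tendsto k h (hm.sol.cont_u h0) (fun y => hm.nn y t h0) (fun y => hm.le y t h0)
      (fun y => hD y t h0 h2) (fun y => hE y t h0 h2) (hm.top t h0) (hm.bot t h0)
  have key2 : ∀ t, 0 < t → t < t2 + 1 → _ := fun t h0 h2 =>
    phi_cut_tendsto k h (hm.sol.cont_u h0) (fun y => hm.nn y t h0) (fun y => hD y t h0 h2)
  have wi : ∀ j : ℕ, 1 ≤ j → _ := fun j hj =>
    hm.weak_interval (φ := fun y => φ y * k.K0 j y)
      (φ1 := fun y => φ1 y * k.K0 j y + φ y * k.K1 j y)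
      (φ2 := fun y => φ2 y * k.K0 j y + 2 * (φ1 y * k.K1 j y) + φ y * k.K2 j y)
      (p := -(j:ℝ)) (q := j) (fun y => (h.d1 y).mul (k.K0_deriv j y))
      (fun y => by
        refine HasDerivAt.congr_deriv
          (((h.d2 y).mul (k.K0_deriv j y)).add ((h.d1 y).mul (k.K1_deriv j y))) ?_
        ring)
      (by
        have := k.K0_cont j
        have := k.K1_cont j
        have := k.K2_cont j
        fun_prop)
      (by have : (0:ℝ) ≤ j := Nat.cast_nonneg j
          linarith)
      (by rw [(k.K_out (by exact_mod_cast hj) (fun hh => lt_irrefl _ hh.1)).1, mul_zero])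
      (by rw [(k.K_out (by exact_mod_cast hj) (fun hh => lt_irrefl _ hh.2)).1, mul_zero])
      (by rw [(k.K_out (by exact_mod_cast hj) (fun hh => lt_irrefl _ hh.1)).1,
            (k.K_out (by exact_mod_cast hj) (fun hh => lt_irrefl _ hh.1)).2.1]; ring)
      (by rw [(k.K_out (by exact_mod_cast hj) (fun hh => lt_irrefl _ hh.2)).1,
            (k.K_out (by exact_mod_cast hj) (fun hh => lt_irrefl _ hh.2)).2.1]; ring)
      ht1 ht
  have lim1 := (key2 t2 (ht1.trans_le ht) (by linarith)).sub (key2 t1 ht1 (by linarith))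
  have lim2 := intervalIntegral.tendsto_integral_filter_of_dominated_convergence
    (l := atTop) (μ := volume) (a := t1) (b := t2)
    (F := fun (j : ℕ) t => ∫ y in (-(j:ℝ))..j, kG (fun y => φ1 y * k.K0 j y + φ y * k.K1 j y)
      (fun y => φ2 y * k.K0 j y + 2 * (φ1 y * k.K1 j y) + φ y * k.K2 j y) y (m y t))
    (f := fun t => ∫ y, kG φ1 φ2 y (m y t)) (fun _ => _)
    (by
      filter_upwards [eventually_ge_atTop 1] with j hj
      have := (wi j hj).1.aestronglyMeasurable
      rwa [← uIoc_of_le ht] at this)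
    (by
      filter_upwards [eventually_ge_atTop 1] with j hj
      refine ae_of_all _ fun t htt => ?_
      rw [uIoc_of_le ht] at htt
      exact (key t (ht1.trans htt.1) (by linarith [htt.2])).1 j hj)
    intervalIntegrable_const
    (ae_of_all _ fun t htt => by
      rw [uIoc_of_le ht] at htt
      exact (key t (ht1.trans htt.1) (by linarith [htt.2])).2)
  refine tendsto_nhds_unique lim2 (lim1.congr' ?_)
  filter_upwards [eventually_ge_atTop 1] with j hj
  exact (wi j hj).2.symm

end

/-! ### The equilibrium and the weight -/

/-- The Planck equilibrium `n̂₀(e^y)`. -/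
noncomputable def nh (y : ℝ) : ℝ := exp (2 * y) / (exp (exp y) - 1)

lemma expexp_pos (y : ℝ) : 0 < exp (exp y) - 1 := by
  have := Real.add_one_lt_exp (exp_pos y).ne'
  linarith [exp_pos y]

lemma nh_pos (y : ℝ) : 0 < nh y := div_pos (exp_pos _) (expexp_pos y)

lemma nh_le (y : ℝ) : nh y ≤ exp y := by
  unfold nh
  rw [div_le_iff₀ (expexp_pos y), show 2 * y = y + y by ring, exp_add]
  have := Real.add_one_le_exp (exp y)
  exact mul_le_mul_of_nonneg_left (by linarith) (exp_pos y).le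

lemma nh_deriv (y : ℝ) : HasDerivAt nh (nh y * (2 - exp y - exp (-y) * nh y)) y := by
  have h1 : HasDerivAt (fun y : ℝ => exp (2 * y)) (exp (2 * y) * 2) y := by
    simpa using ((hasDerivAt_id y).const_mul 2).exp
  have h2 : HasDerivAt (fun y : ℝ => exp (exp y) - 1) (exp (exp y) * exp y) y :=
    ((Real.hasDerivAt_exp y).exp).sub_const 1
  have hne := (expexp_pos y).ne'
  refine HasDerivAt.congr_deriv (h1.div h2 hne) ?_
  unfold nh
  rw [show 2 * y = y + y by ring, exp_add, exp_neg]
  have := (exp_pos y).ne'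
  field_simp
  ring

lemma nh_cont : Continuous nh := continuous_iff_continuousAt.2 fun y => (nh_deriv y).continuousAt

lemma nh_dom2 {y : ℝ} : exp (2 * y) * nh y ≤ 24 := by
  unfold nh
  rw [← mul_div_assoc, div_le_iff₀ (expexp_pos y)]
  have := Real.sum_le_exp_of_nonneg (exp_pos y).le 5
  norm_num [Finset.sum_range_succ, Nat.factorial] at this
  have hx := exp_pos y
  have : exp (2 * y) * exp (2 * y) = exp y ^ 4 := by
    rw [← exp_add, ← Real.exp_nat_mul]; congr 1; push_cast; ring
  nlinarith [pow_pos hx 2, pow_pos hx 3]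

lemma nh_dom (y : ℝ) : exp y * nh y ≤ 24 * exp (-|y|) := by
  rcases le_total y 0 with hy | hy
  · rw [abs_of_nonpos hy, neg_neg]
    have h1 := nh_le y
    have h2 : exp y ≤ 1 := exp_le_one_iff.2 hy
    nlinarith [exp_pos y, nh_pos y]
  · rw [abs_of_nonneg hy]
    have := nh_dom2 (y := y)
    calc exp y * nh y = exp (2 * y) * nh y * exp (-y) := by
          rw [show 2 * y = y + y by ring, exp_add, exp_neg]; field_simp
      _ ≤ _ := mul_le_mul_of_nonneg_right this (exp_pos _).le

/-- `x² eˣ / (eˣ - 1)²` at `x = e^y`. -/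
noncomputable def Qw (y : ℝ) : ℝ := nh y ^ 2 * exp (-(2 * y)) * exp (exp y)

lemma Qw_pos (y : ℝ) : 0 < Qw y := by
  have := nh_pos y
  unfold Qw; positivity

lemma Qw_deriv (y : ℝ) : HasDerivAt Qw (Qw y * (2 - exp y - 2 * (exp (-y) * nh y))) y := by
  have h1 : HasDerivAt (fun y : ℝ => exp (-(2 * y))) (exp (-(2 * y)) * (-2)) y := by
    simpa using (((hasDerivAt_id y).const_mul 2).neg).exp
  have h2 : HasDerivAt (fun y : ℝ => exp (exp y)) (exp (exp y) * exp y) y :=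
    (Real.hasDerivAt_exp y).exp
  refine HasDerivAt.congr_deriv ((((nh_deriv y).pow 2).mul h1).mul h2) ?_
  simp only [Qw, Pi.mul_apply, Pi.pow_apply]
  ring

lemma Qw_cont : Continuous Qw := continuous_iff_continuousAt.2 fun y => (Qw_deriv y).continuousAt

/-- The function `(1+x)² e^{-x}` comparable with `Qw`. -/
noncomputable def Uw (y : ℝ) : ℝ := (1 + exp y) ^ 2 * exp (-exp y)

lemma Qw_eq (y : ℝ) : Qw y = (exp y / (1 - exp (-exp y))) ^ 2 * exp (-exp y) := by
  unfold Qw nh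
  have h1 := (expexp_pos y).ne'
  have h2 := (exp_pos y).ne'
  have h3 := (exp_pos (exp y)).ne'
  have h4 : 1 - (exp (exp y))⁻¹ ≠ 0 := by
    intro h
    apply h1
    field_simp at h
    linarith
  rw [exp_neg, exp_neg, show 2 * y = y + y by ring, exp_add]
  field_simp

lemma Qw_le (y : ℝ) : Qw y ≤ Uw y ∧ Uw y ≤ 4 * Qw y := by
  set x := exp y with hx
  have x0 : 0 < x := exp_pos y
  have e1 : 0 < 1 - exp (-x) := by
    have : exp (-x) < 1 := by simpa using Real.exp_lt_exp.2 (by linarith : -x < 0)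
    linarith
  have e2 : x / (1 - exp (-x)) ≤ 1 + x := by
    rw [div_le_iff₀ e1]
    have h1 := Real.add_one_le_exp x
    have h2 : exp x * exp (-x) = 1 := by rw [← exp_add]; simp
    nlinarith [exp_pos (-x)]
  have e3 : 1 + x ≤ 2 * (x / (1 - exp (-x))) := by
    rw [← mul_div_assoc, le_div_iff₀ e1]
    have h1 := Real.add_one_le_exp (-x)
    have h2 := exp_pos (-x)
    nlinarith
  have e4 : 0 ≤ x / (1 - exp (-x)) := by positivity
  have e5 := exp_pos (-x)
  rw [Qw_eq]
  unfold Uw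
  rw [← hx]
  constructor
  · exact mul_le_mul_of_nonneg_right (pow_le_pow_left₀ e4 e2 2) e5.le
  · calc (1 + x) ^ 2 * exp (-x) ≤ (2 * (x / (1 - exp (-x)))) ^ 2 * exp (-x) :=
          mul_le_mul_of_nonneg_right (pow_le_pow_left₀ (by linarith) e3 2) e5.le
      _ = _ := by ring

/-- The tail integral `∫_x^∞ (1+s)² e^{-s} ds`. -/
noncomputable def Vw (y : ℝ) : ℝ := ((1 + exp y) ^ 2 + 2 * (1 + exp y) + 2) * exp (-exp y)

lemma Vw_deriv (y : ℝ) : HasDerivAt Vw (-(Uw y * exp y)) y := by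
  have h1 := Real.hasDerivAt_exp y
  have h2 : HasDerivAt (fun y : ℝ => exp (-exp y)) (exp (-exp y) * (-exp y)) y := h1.neg.exp
  have h3 : HasDerivAt (fun y : ℝ => 1 + exp y) (exp y) y := h1.const_add 1
  refine HasDerivAt.congr_deriv ((((h3.pow 2).add (h3.const_mul 2)).add_const 2).mul h2) ?_
  simp only [Uw, Pi.add_apply, Pi.pow_apply]
  ring

lemma Vw_tendsto : Tendsto Vw atTop (𝓝 0) := by
  have h : Tendsto (fun x : ℝ => ((1 + x) ^ 2 + 2 * (1 + x) + 2) * exp (-x)) atTop (𝓝 0) := by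
    have h2 := tendsto_pow_mul_exp_neg_atTop_nhds_zero 2
    have h1 := (tendsto_pow_mul_exp_neg_atTop_nhds_zero 1).const_mul 4
    have h0 := (tendsto_pow_mul_exp_neg_atTop_nhds_zero 0).const_mul 5
    have := (h2.add h1).add h0
    simp only [mul_zero, add_zero] at this
    refine this.congr fun x => ?_
    ring
  exact h.comp Real.tendsto_exp_atTop

lemma Uw_int (y : ℝ) : IntegrableOn (fun s => Uw s * exp s) (Ioi y) := by
  have := integrableOn_Ioi_deriv_of_nonpos' (a := y) (fun s _ => Vw_deriv s)
    (fun s _ => by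
      have : 0 ≤ Uw s * exp s := by unfold Uw; positivity
      linarith) Vw_tendsto
  simpa using this.neg

lemma Uw_integral (y : ℝ) : ∫ s in Ioi y, Uw s * exp s = Vw y := by
  have := integral_Ioi_of_hasDerivAt_of_nonpos' (a := y) (fun s _ => Vw_deriv s)
    (fun s _ => by
      have : 0 ≤ Uw s * exp s := by unfold Uw; positivity
      linarith) Vw_tendsto
  rw [integral_neg] at this
  linarith

lemma Qw_int (y : ℝ) : IntegrableOn (fun s => Qw s * exp s) (Ioi y) := by
  have hc := Qw_cont
  refine (Uw_int y).mono' (Continuous.aestronglyMeasurable (by fun_prop)) (ae_of_all _ fun s => ?_)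
  rw [Real.norm_eq_abs, abs_of_nonneg (mul_nonneg (Qw_pos s).le (exp_pos s).le)]
  exact mul_le_mul_of_nonneg_right (Qw_le s).1 (exp_pos s).le

/-- The tail integral of `x² eˣ / (eˣ - 1)²` from `x = e^y`. -/
noncomputable def Iw (y : ℝ) : ℝ := ∫ s in Ioi y, Qw s * exp s

lemma Iw_deriv (y : ℝ) : HasDerivAt Iw (-(Qw y * exp y)) y := by
  have hc : Continuous (fun s => Qw s * exp s) := Qw_cont.mul Real.continuous_exp
  have h1 : ∀ z, Iw z = Iw 0 - ∫ s in (0:ℝ)..z, Qw s * exp s := fun z => by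
    have := intervalIntegral.integral_Ioi_sub_Ioi' (Qw_int 0) (Qw_int z)
    unfold Iw
    linarith
  have h2 := (intervalIntegral.integral_hasDerivAt_right (hc.intervalIntegrable 0 y)
    hc.aestronglyMeasurable.stronglyMeasurableAtFilter hc.continuousAt).const_sub (Iw 0)
  exact h2.congr_of_eventuallyEq (Eventually.of_forall h1)

lemma Iw_bounds (y : ℝ) : Qw y ≤ 4 * Iw y ∧ Iw y ≤ 20 * Qw y := by
  have a1 : Iw y ≤ Vw y := by
    rw [← Uw_integral]
    exact setIntegral_mono (Qw_int y) (Uw_int y)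
      fun s => mul_le_mul_of_nonneg_right (Qw_le s).1 (exp_pos s).le
  have a2 : Vw y ≤ 4 * Iw y := by
    rw [← Uw_integral, Iw, ← integral_const_mul]
    refine setIntegral_mono (Uw_int y) ((Qw_int y).const_mul 4) fun s => ?_
    have := mul_le_mul_of_nonneg_right (Qw_le s).2 (exp_pos s).le
    simp only
    linarith
  have a3 : Uw y ≤ Vw y ∧ Vw y ≤ 5 * Uw y := by
    have x0 := exp_pos y
    have e0 := exp_pos (-exp y)
    unfold Uw Vw
    constructor
    · refine mul_le_mul_of_nonneg_right ?_ e0.le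
      nlinarith
    · rw [← mul_assoc]
      refine mul_le_mul_of_nonneg_right ?_ e0.le
      nlinarith
  have a4 := Qw_le y
  constructor <;> linarith

/-- The weight `q`; `-q` (cut off near `-∞`) is the derivative of the test function. -/
noncomputable def qw (y : ℝ) : ℝ := Iw y / (Qw y * exp y)

/-- The linear equation for `q` that turns the linear part of the weak form into the mass excess. -/
lemma qw_deriv (y : ℝ) :
    HasDerivAt qw (-1 + qw y * (exp y - 3 + 2 * (exp (-y) * nh y))) y := by
  have h1 := (Qw_pos y).ne'
  have h2 := (exp_pos y).ne'
  refine HasDerivAt.congr_deriv ((Iw_deriv y).div ((Qw_deriv y).mul (Real.hasDerivAt_exp y))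
    (mul_ne_zero h1 h2)) ?_
  simp only [qw]
  field_simp
  ring

lemma qw_bounds (y : ℝ) : 1 ≤ 4 * (exp y * qw y) ∧ exp y * qw y ≤ 20 := by
  have h := Iw_bounds y
  have h1 := Qw_pos y
  have h2 := exp_pos y
  have e : exp y * qw y = Iw y / Qw y := by unfold qw; field_simp
  rw [e]
  constructor
  · rw [← mul_div_assoc, le_div_iff₀ h1]; linarith
  · rw [div_le_iff₀ h1]; exact h.2

lemma qw_pos (y : ℝ) : 0 < qw y := by
  have := (qw_bounds y).1
  have h2 := exp_pos y
  by_contra hq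
  nlinarith [mul_nonneg h2.le (by linarith : 0 ≤ -qw y)]

lemma qw_cont : Continuous qw := continuous_iff_continuousAt.2 fun y => (qw_deriv y).continuousAt

lemma qw_le (y : ℝ) : qw y ≤ 20 * exp (-y) := by
  have := (qw_bounds y).2
  rw [exp_neg, ← div_eq_mul_inv, le_div_iff₀ (exp_pos y)]
  linarith

/-! ### The test function and the differential inequality at a fixed time -/

/-- The test function: its derivative is `-q` cut off to `y ≥ -L`. -/
noncomputable def phL (k : Cutoff) (L y : ℝ) : ℝ := -∫ s in (0:ℝ)..y, qw s * k.S (s + L)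
/-- First derivative of `phL`. -/
noncomputable def phL1 (k : Cutoff) (L y : ℝ) : ℝ := -(qw y * k.S (y + L))
/-- Second derivative of `phL`. -/
noncomputable def phL2 (k : Cutoff) (L y : ℝ) : ℝ :=
  -((-1 + qw y * (exp y - 3 + 2 * (exp (-y) * nh y))) * k.S (y + L) + qw y * k.S1 (y + L))

section
variable (k : Cutoff) {L : ℝ}

lemma phL_deriv (y : ℝ) : HasDerivAt (phL k L) (phL1 k L y) y := by
  have h0 := qw_cont
  have h1 := k.c0
  have hc : Continuous (fun s => qw s * k.S (s + L)) := by fun_prop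
  exact (intervalIntegral.integral_hasDerivAt_right (hc.intervalIntegrable 0 y)
    hc.aestronglyMeasurable.stronglyMeasurableAtFilter hc.continuousAt).neg

lemma phL1_deriv (y : ℝ) : HasDerivAt (phL1 k L) (phL2 k L y) y := by
  have hl : HasDerivAt (fun y : ℝ => y + L) 1 y := (hasDerivAt_id y).add_const _
  refine HasDerivAt.congr_deriv (((qw_deriv y).mul ((k.h1 _).comp y hl)).neg) ?_
  simp only [phL2, Function.comp, mul_one]

lemma phL_zero : phL k L 0 = 0 := by simp [phL]

lemma phL1_nonpos (y : ℝ) : phL1 k L y ≤ 0 := by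
  have := mul_nonneg (qw_pos y).le (k.nonneg (y + L))
  unfold phL1; linarith

lemma phL_anti : Antitone (phL k L) :=
  antitone_of_deriv_nonpos (fun y => (phL_deriv k y).differentiableAt)
    fun y => by rw [(phL_deriv k y).deriv]; exact phL1_nonpos k y

lemma phL_mono' : Monotone (fun y => phL k L y - 20 * exp (-y)) := by
  have hd : ∀ y, HasDerivAt (fun y => phL k L y - 20 * exp (-y)) (phL1 k L y + 20 * exp (-y)) y := by
    intro y
    have h1 : HasDerivAt (fun y : ℝ => exp (-y)) (exp (-y) * (-1)) y := (hasDerivAt_id y).neg.exp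
    refine HasDerivAt.congr_deriv ((phL_deriv k y).sub (h1.const_mul 20)) ?_
    ring
  refine monotone_of_deriv_nonneg (fun y => (hd y).differentiableAt) fun y => ?_
  rw [(hd y).deriv]
  have h1 := qw_le y
  have h2 := k.le_one (y + L)
  have h3 := k.nonneg (y + L)
  have h4 := qw_pos y
  unfold phL1
  nlinarith

lemma phL_pos {y : ℝ} (hy : 0 ≤ y) : -20 ≤ phL k L y ∧ phL k L y ≤ 0 := by
  have h1 := phL_anti k (L := L) hy
  have h2 := phL_mono' k (L := L) hy
  simp only [phL_zero, neg_zero, exp_zero] at h1 h2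
  exact ⟨by linarith [exp_pos (-y)], h1⟩

lemma phL_neg {y : ℝ} (hy : y ≤ 0) : 0 ≤ phL k L y ∧ phL k L y ≤ 20 * exp (-y) := by
  have h1 := phL_anti k (L := L) hy
  have h2 := phL_mono' k (L := L) hy
  simp only [phL_zero, neg_zero, exp_zero] at h1 h2
  exact ⟨h1, by linarith⟩

lemma phL_le (hL : 0 ≤ L) (y : ℝ) : phL k L y ≤ 20 * exp L := by
  rcases le_total 0 y with hy | hy
  · exact (phL_pos k hy).2.trans (by positivity)
  rcases le_total y (-L) with hy' | hy'
  · have hm : MonotoneOn (phL k L) (Iic (-L)) := by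
      refine monotoneOn_of_deriv_nonneg (convex_Iic _)
        (fun y _ => (phL_deriv k y).continuousAt.continuousWithinAt)
        (fun y _ => (phL_deriv k y).differentiableAt.differentiableWithinAt) fun y hy => ?_
      rw [interior_Iic, mem_Iio] at hy
      rw [(phL_deriv k y).deriv, phL1, k.zero _ (by linarith)]
      simp
    have h1 := hm (mem_Iic.2 hy') (mem_Iic.2 le_rfl) hy'
    have h2 := (phL_neg k (L := L) (y := -L) (by linarith)).2
    rw [neg_neg] at h2
    linarith
  · have h2 := (phL_neg k (L := L) hy).2
    have : exp (-y) ≤ exp L := exp_le_exp.2 (by linarith)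
    linarith

lemma exp_neg_mul_nh_le (y : ℝ) : exp (-y) * nh y ≤ 1 := by
  have := nh_le y
  rw [exp_neg, inv_mul_le_iff₀ (exp_pos y)]
  linarith

lemma phL_tst (hL : 0 ≤ L) : Tst (phL k L) (phL1 k L) (phL2 k L)
    (21 + 100 * exp L + 20 * exp L * k.C) L where
  d1 := phL_deriv k
  d2 := phL1_deriv k
  c2 := by
    have h0 := qw_cont
    have h1 := k.c0
    have h2 := k.c1
    have h3 := nh_cont
    unfold phL2; fun_prop
  b0 y := by
    have hC := k.hC
    have eL := exp_pos L
    have e1 : 1 ≤ exp L := one_le_exp hL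
    have h1 := phL_le k hL y
    have h2 : -20 ≤ phL k L y := by
      rcases le_total 0 y with hy | hy
      · exact (phL_pos k hy).1
      · linarith [(phL_neg k (L := L) hy).1]
    have : 0 ≤ exp L * k.C := by positivity
    rw [abs_le]; constructor <;> linarith
  b1 y := by
    have hC := k.hC
    have eL := exp_pos L
    have h1 := (qw_bounds y).2
    have h2 : 0 ≤ exp y * qw y := mul_nonneg (exp_pos y).le (qw_pos y).le
    have h3 := k.le_one (y + L)
    have h4 := k.nonneg (y + L)
    have : exp y * phL1 k L y = -(exp y * qw y * k.S (y + L)) := by unfold phL1; ring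
    rw [this, abs_neg, abs_of_nonneg (mul_nonneg h2 h4)]
    have : 0 ≤ exp L * k.C := by positivity
    nlinarith
  b2 y := by
    have hC := k.hC
    have eL := exp_pos L
    have hLC : 0 ≤ exp L * k.C := by positivity
    unfold phL2
    rcases le_total y (-L) with hy | hy
    · rw [k.zero _ (by linarith), k.S1_zero _ (by linarith)]
      simp only [mul_zero, add_zero, neg_zero, abs_zero]
      linarith
    · have q0 := qw_pos y
      have q1 : qw y ≤ 20 * exp L := by
        have h1 := qw_le y
        have : exp (-y) ≤ exp L := exp_le_exp.2 (by linarith)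
        linarith
      have h1 := (qw_bounds y).2
      have h2 : 0 ≤ exp y * qw y := mul_nonneg (exp_pos y).le (qw_pos y).le
      have h3 := k.le_one (y + L)
      have h4 := k.nonneg (y + L)
      have h5 := exp_neg_mul_nh_le y
      have h6 : 0 ≤ exp (-y) * nh y := mul_nonneg (exp_pos _).le (nh_pos y).le
      have h7 := k.S1_le (y + L)
      have h8 := k.S1_nonneg (y + L)
      have a1 : |-1 + qw y * (exp y - 3 + 2 * (exp (-y) * nh y))| ≤ 21 + 100 * exp L := by
        have : qw y * (exp (-y) * nh y) ≤ qw y * 1 := mul_le_mul_of_nonneg_left h5 q0.le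
        have : 0 ≤ qw y * (exp (-y) * nh y) := mul_nonneg q0.le h6
        rw [abs_le]; constructor <;> nlinarith
      have a2 : |(-1 + qw y * (exp y - 3 + 2 * (exp (-y) * nh y))) * k.S (y + L)|
          ≤ (21 + 100 * exp L) * 1 := by
        rw [abs_mul, abs_of_nonneg h4]
        exact mul_le_mul a1 h3 h4 (by positivity)
      have a3 : |qw y * k.S1 (y + L)| ≤ 20 * exp L * k.C := by
        rw [abs_of_nonneg (mul_nonneg q0.le h8)]
        exact mul_le_mul q1 h7 h8 (by positivity)
      rw [abs_neg]
      exact (abs_add_le _ _).trans (by linarith)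
  z y hy := by
    unfold phL1
    rw [k.zero _ (by linarith)]; simp

end

lemma nh_bdd (y : ℝ) : nh y ≤ 24 := by
  rcases le_total y 0 with hy | hy
  · have : exp y ≤ 1 := exp_le_one_iff.2 hy
    linarith [nh_le y]
  · exact (le_mul_of_one_le_left (nh_pos y).le (one_le_exp (by linarith))).trans nh_dom2

lemma nh_top : Tendsto nh atTop (𝓝 0) := by
  have h1 : Tendsto (fun y : ℝ => 24 * exp (-(2 * y))) atTop (𝓝 0) := by
    have : Tendsto (fun y : ℝ => exp (-(2 * y))) atTop (𝓝 0) :=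
      Real.tendsto_exp_neg_atTop_nhds_zero.comp (tendsto_id.const_mul_atTop (by norm_num))
    simpa using this.const_mul 24
  refine squeeze_zero (fun y => (nh_pos y).le) (fun y => ?_) h1
  have := nh_dom2 (y := y)
  rw [exp_neg, ← div_eq_mul_inv, le_div_iff₀ (exp_pos _)]
  linarith

/-- Anything continuous and controlled by `K e^y v`, where `e^y v = O(e^{-|y|})`, is integrable. -/
lemma int_of_dom {f v : ℝ → ℝ} (hf : Continuous f) {K D : ℝ} (hK0 : 0 ≤ K)
    (vD : ∀ y, exp y * v y ≤ D * exp (-|y|)) (hK : ∀ y, |f y| ≤ K * (exp y * v y)) :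
    Integrable f :=
  ((int_expabs.const_mul D).const_mul K).mono' hf.aestronglyMeasurable
    (ae_of_all _ fun y => (hK y).trans (mul_le_mul_of_nonneg_left (vD y) hK0))

/-- The equilibrium annihilates the weak form: the integrand is the derivative of `e^y φ' nh`,
because the flux of `nh` vanishes. -/
lemma nh_stationary {φ φ1 φ2 : ℝ → ℝ} {C L : ℝ} (h : Tst φ φ1 φ2 C L) :
    Integrable (fun y => kG φ1 φ2 y (nh y)) ∧ ∫ y, kG φ1 φ2 y (nh y) = 0 := by
  have hC := h.C0
  have ci : Integrable (fun y => kG φ1 φ2 y (nh y)) :=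
    int_of_dom (h.kG_cont.comp (continuous_id.prodMk nh_cont)) (by positivity) nh_dom
      (fun y => h.kG_bound y (nh y) (nh_pos y).le (nh_bdd y))
  refine ⟨ci, ?_⟩
  have := integral_of_hasDerivAt_of_tendsto (f := fun y => exp y * φ1 y * nh y) (m := 0) (n := 0)
    (fun y => ?_) ci ?_ ?_
  · simpa using this
  · refine HasDerivAt.congr_deriv (((Real.hasDerivAt_exp y).mul (h.d2 y)).mul (nh_deriv y)) ?_
    simp only [kG, exp_neg, Pi.mul_apply]
    field_simp
    ring
  · refine tendsto_const_nhds.congr' ?_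
    filter_upwards [eventually_le_atBot (-L)] with y hy
    rw [h.z y hy]; simp
  · refine squeeze_zero_norm (a := fun y => C * nh y) (fun y => ?_) (by simpa using nh_top.const_mul C)
    rw [norm_mul, Real.norm_eq_abs, Real.norm_eq_abs, abs_of_pos (nh_pos y)]
    exact mul_le_mul_of_nonneg_right (h.b1 y) (nh_pos y).le

/-! ### Integral inequalities at a fixed time -/

/-- `f` is integrable on the line with integral `I`. -/
def HI (f : ℝ → ℝ) (I : ℝ) : Prop := Integrable f ∧ ∫ y, f y = I

namespace HI
variable {f g : ℝ → ℝ} {I J : ℝ}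

lemma of (h : Integrable f) : HI f (∫ y, f y) := ⟨h, rfl⟩
lemma add (hf : HI f I) (hg : HI g J) : HI (fun y => f y + g y) (I + J) :=
  ⟨hf.1.add hg.1, by rw [integral_add hf.1 hg.1, hf.2, hg.2]⟩
lemma sub (hf : HI f I) (hg : HI g J) : HI (fun y => f y - g y) (I - J) :=
  ⟨hf.1.sub hg.1, by rw [integral_sub hf.1 hg.1, hf.2, hg.2]⟩
lemma mul (c : ℝ) (hf : HI f I) : HI (fun y => c * f y) (c * I) :=
  ⟨hf.1.const_mul c, by rw [integral_const_mul, hf.2]⟩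
lemma mono (hf : HI f I) (hg : HI g J) (h : ∀ y, f y ≤ g y) : I ≤ J := by
  rw [← hf.2, ← hg.2]; exact integral_mono hf.1 hg.1 h
end HI

/-- The function `exp` cut off to `(-∞, a]`. -/
noncomputable def eI (a y : ℝ) : ℝ := (Iic a).indicator exp y

lemma eI_HI (a : ℝ) : HI (eI a) (exp a) := by
  refine ⟨(integrable_indicator_iff measurableSet_Iic).2 (integrableOn_exp_Iic a), ?_⟩
  unfold eI
  rw [integral_indicator measurableSet_Iic, integral_exp_Iic]

lemma eI_nonneg (a y : ℝ) : 0 ≤ eI a y := indicator_nonneg (fun _ _ => (exp_pos _).le) _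
lemma eI_of_le {a y : ℝ} (h : y ≤ a) : eI a y = exp y := indicator_of_mem (s := Iic a) h _

/-- A time slice of a solution in logarithmic variables. -/
structure Slice (v : ℝ → ℝ) (M D : ℝ) : Prop where
  c : Continuous v
  nn : ∀ y, 0 ≤ v y
  le : ∀ y, v y ≤ M
  dom : ∀ y, exp y * v y ≤ D * exp (-|y|)

section
variable {v : ℝ → ℝ} {M D : ℝ} {L : ℝ}

lemma Slice.mass (h : Slice v M D) : Integrable (fun y => exp y * v y) := by
  refine int_of_dom (K := 1) ?_ zero_le_one h.dom (fun y => ?_)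
  · have := h.c
    fun_prop
  · rw [abs_of_nonneg (mul_nonneg (exp_pos _).le (h.nn y)), one_mul]

lemma Slice.test (h : Slice v M D) {φ φ1 φ2 : ℝ → ℝ} {C : ℝ} (t : Tst φ φ1 φ2 C L) :
    Integrable (fun y => φ y * exp y * v y) := by
  refine int_of_dom (K := C) ?_ t.C0 h.dom (fun y => ?_)
  · have := h.c
    have := t.cc0
    fun_prop
  · rw [mul_assoc, abs_mul, abs_of_nonneg (mul_nonneg (exp_pos _).le (h.nn y))]
    exact mul_le_mul_of_nonneg_right (t.b0 y) (mul_nonneg (exp_pos _).le (h.nn y))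

lemma Slice.kGi (h : Slice v M D) {φ φ1 φ2 : ℝ → ℝ} {C : ℝ} (t : Tst φ φ1 φ2 C L) :
    Integrable (fun y => kG φ1 φ2 y (v y)) := by
  have hC := t.C0
  have hM : 0 ≤ M := (h.nn 0).trans (h.le 0)
  exact int_of_dom (t.kG_cont.comp (continuous_id.prodMk h.c)) (by positivity) h.dom
      (fun y => t.kG_bound y (v y) (h.nn y) (h.le y))

lemma nh_slice : Slice nh 24 24 := ⟨nh_cont, fun y => (nh_pos y).le, nh_bdd, nh_dom⟩

lemma Slice.S1i (h : Slice v M D) (k : Cutoff) (L : ℝ) :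
    Integrable (fun y => v y * k.S1 (y + L)) :=
  k.mul_S1_int h.c (fun y => by rw [abs_of_nonneg (h.nn y)]; exact h.le y) L

/-- The dissipation density is integrable. -/
lemma Slice.Ei (h : Slice v M D) (k : Cutoff) (hL : 0 ≤ L) :
    Integrable (fun y => qw y * k.S (y + L) * (v y - nh y) ^ 2) := by
  have t := phL_tst k hL
  have hM : 0 ≤ M := (h.nn 0).trans (h.le 0)
  have := k.c0
  have := qw_cont
  have := h.c
  have := nh_cont
  set C := 21 + 100 * exp L + 20 * exp L * k.C
  have hC := t.C0
  refine Integrable.mono' ((h.mass.add nh_slice.mass).const_mul (C * exp L * exp L * (M + 24)))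
    (Continuous.aestronglyMeasurable (by fun_prop)) (Eventually.of_forall fun y => ?_)
  have h1 := t.b1'' y
  simp only [phL1, abs_neg] at h1
  rw [norm_mul, Real.norm_eq_abs, Real.norm_eq_abs, abs_of_nonneg (sq_nonneg (v y - nh y))]
  have a1 := h.nn y
  have a2 := h.le y
  have a3 := (nh_pos y).le
  have a4 := nh_bdd y
  have h2 : (v y - nh y) ^ 2 ≤ (M + 24) * (v y + nh y) := by nlinarith
  calc _ ≤ (C * exp L * exp L * exp y) * ((M + 24) * (v y + nh y)) :=
        mul_le_mul h1 h2 (sq_nonneg _) (by positivity)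
    _ = _ := by simp only [Pi.add_apply]; ring

/-- Lower bound for the localized functional. -/
lemma Slice.F_lower (h : Slice v M D) (k : Cutoff) (hL : 0 ≤ L) :
    -20 * (∫ y, exp y * v y) - 20 ≤
      (∫ y, phL k L y * exp y * v y) - ∫ y, phL k L y * exp y * nh y := by
  have t := phL_tst k hL
  have A := ((HI.of h.mass).mul (-20)).sub ((eI_HI 0).mul 20)
  have B := (HI.of (h.test t)).sub (HI.of (nh_slice.test t))
  have := A.mono B (fun y => ?_)
  · simpa using this
  have a1 := h.nn y
  have a3 := (nh_pos y).le
  have e := exp_pos y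
  rcases le_total 0 y with hy | hy
  · obtain ⟨p1, p2⟩ := phL_pos k (L := L) hy
    have := eI_nonneg 0 y
    have q1 : 0 ≤ (phL k L y + 20) * (exp y * v y) := by
      apply mul_nonneg (by linarith); positivity
    have q2 : phL k L y * (exp y * nh y) ≤ 0 := by
      apply mul_nonpos_of_nonpos_of_nonneg p2; positivity
    nlinarith
  · obtain ⟨p1, p2⟩ := phL_neg k (L := L) hy
    rw [eI_of_le hy]
    have q1 : 0 ≤ phL k L y * (exp y * v y) := by positivity
    have q0 : 0 ≤ exp y * v y := by positivity
    have p3 : phL k L y * exp y ≤ 20 := by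
      calc _ ≤ 20 * exp (-y) * exp y := mul_le_mul_of_nonneg_right p2 e.le
        _ = 20 := by rw [mul_assoc, ← exp_add]; simp
    have q2 : phL k L y * exp y * nh y ≤ 20 * exp y :=
      mul_le_mul p3 (nh_le y) a3 (by norm_num)
    nlinarith

/-- The rate of change of the functional dominates the mass excess plus the dissipation. -/
lemma Slice.R_lower (h : Slice v M D) (k : Cutoff) (hL : 0 ≤ L) :
    (∫ y, exp y * v y) - (∫ y, exp y * nh y) - M * exp (1 - L)
      - 20 * (∫ y, v y * k.S1 (y + L)) + (∫ y, qw y * k.S (y + L) * (v y - nh y) ^ 2) ≤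
      ∫ y, kG (phL1 k L) (phL2 k L) y (v y) := by
  have t := phL_tst k hL
  have A := ((((HI.of h.mass).sub (HI.of nh_slice.mass)).sub ((eI_HI (1 - L)).mul M)).sub
    ((HI.of (h.S1i k L)).mul 20)).add (HI.of (h.Ei k hL))
  have B := (HI.of (h.kGi t)).sub (HI.of (nh_stationary t).1)
  rw [(nh_stationary t).2] at B
  have := A.mono B (fun y => ?_)
  · simpa using this
  have a1 := h.nn y
  have a2 := h.le y
  have a3 := (nh_pos y).le
  have e := exp_pos y
  have id : kG (phL1 k L) (phL2 k L) y (v y) - kG (phL1 k L) (phL2 k L) y (nh y) =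
      exp y * k.S (y + L) * (v y - nh y) - exp y * qw y * k.S1 (y + L) * (v y - nh y)
        + qw y * k.S (y + L) * (v y - nh y) ^ 2 := by
    simp only [kG, phL1, phL2, exp_neg]
    field_simp
    ring
  rw [id]
  have b1 : exp y * qw y * k.S1 (y + L) * (v y - nh y) ≤ 20 * (v y * k.S1 (y + L)) := by
    have s := k.S1_nonneg (y + L)
    have q := (qw_pos y).le
    calc _ ≤ exp y * qw y * k.S1 (y + L) * v y :=
          mul_le_mul_of_nonneg_left (by linarith) (by positivity)
      _ = (exp y * qw y) * (v y * k.S1 (y + L)) := by ring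
      _ ≤ _ := mul_le_mul_of_nonneg_right (qw_bounds y).2 (by positivity)
  have b2 : exp y * (v y - nh y) - M * eI (1 - L) y ≤ exp y * k.S (y + L) * (v y - nh y) := by
    have hM : 0 ≤ M := a1.trans a2
    rcases le_total y (1 - L) with hy | hy
    · rw [eI_of_le hy]
      have s0 := k.nonneg (y + L)
      have s1 := k.le_one (y + L)
      have : (1 - k.S (y + L)) * (v y - nh y) ≤ M := by nlinarith
      nlinarith
    · rw [k.one _ (by linarith)]
      have := mul_nonneg hM (eI_nonneg (1 - L) y)
      linarith
  linarith

/-- Upper bound for the localized functional through the dissipation, with a free parameter `l`. -/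
lemma Slice.F_upper (h : Slice v M D) (k : Cutoff) (hL : 0 ≤ L) {l : ℝ} (hl : 0 < l) :
    (∫ y, phL k L y * exp y * v y) - (∫ y, phL k L y * exp y * nh y) ≤
      4 * l * (∫ y, qw y * k.S (y + L) * (v y - nh y) ^ 2) + 20 * (∫ y, exp y * nh y)
        + 100 / l + 20 * M * exp 1 := by
  have t := phL_tst k hL
  have hM : 0 ≤ M := (h.nn 0).trans (h.le 0)
  have A := ((((HI.of (h.Ei k hL)).mul (4 * l)).add ((HI.of nh_slice.mass).mul 20)).add
    ((eI_HI 0).mul (100 / l))).add ((eI_HI (1 - L)).mul (20 * M * exp L))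
  have B := (HI.of (h.test t)).sub (HI.of (nh_slice.test t))
  have := B.mono A (fun y => ?_)
  · rwa [mul_assoc (20 * M), ← exp_add, add_sub_cancel, exp_zero, mul_one] at this
  have a1 := h.nn y
  have a2 := h.le y
  have a3 := (nh_pos y).le
  have e := exp_pos y
  have q := qw_pos y
  have s0 := k.nonneg (y + L)
  have t1 : 0 ≤ 4 * l * (qw y * k.S (y + L) * (v y - nh y) ^ 2) := by positivity
  have t2 : 0 ≤ 20 * (exp y * nh y) := by positivity
  have t3 : 0 ≤ 100 / l * eI 0 y := mul_nonneg (by positivity) (eI_nonneg _ _)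
  have t4 : 0 ≤ 20 * M * exp L * eI (1 - L) y := mul_nonneg (by positivity) (eI_nonneg _ _)
  rcases le_total 0 y with hy | hy
  · obtain ⟨p1, p2⟩ := phL_pos k (L := L) hy
    have q1 : phL k L y * (exp y * v y) ≤ 0 := by
      apply mul_nonpos_of_nonpos_of_nonneg p2; positivity
    have q2 : 0 ≤ (phL k L y + 20) * (exp y * nh y) := by
      apply mul_nonneg (by linarith); positivity
    nlinarith
  · obtain ⟨p1, p2⟩ := phL_neg k (L := L) hy
    have id : phL k L y * exp y * v y - phL k L y * exp y * nh y =
      phL k L y * exp y * (v y - nh y) := by ring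
    rw [id]
    rcases le_total (v y) (nh y) with hw | hw
    · have : phL k L y * exp y * (v y - nh y) ≤ 0 :=
        mul_nonpos_of_nonneg_of_nonpos (by positivity) (by linarith)
      linarith
    have w0 : 0 ≤ v y - nh y := by linarith
    rcases le_total y (1 - L) with hz | hz
    · rw [eI_of_le hz] at t4 ⊢
      have : phL k L y * exp y * (v y - nh y) ≤ 20 * exp L * exp y * M := by
        have := phL_le k hL y
        gcongr
        linarith
      linarith
    · rw [k.one _ (by linarith)] at t1 ⊢
      rw [eI_of_le hy] at t3 ⊢
      have p3 : phL k L y * exp y ≤ 20 := by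
        calc _ ≤ 20 * exp (-y) * exp y := mul_le_mul_of_nonneg_right p2 e.le
          _ = 20 := by rw [mul_assoc, ← exp_add]; simp
      have p4 : phL k L y * exp y * (v y - nh y) ≤ 20 * (v y - nh y) :=
        mul_le_mul_of_nonneg_right p3 w0
      set w := v y - nh y
      -- the arithmetic-geometric mean inequality, using `1/4 ≤ e^y q`
      have p5 : 20 * w ≤ 4 * l * (qw y * w ^ 2) + 100 / l * exp y := by
        have c1 : l * w ^ 2 / exp y ≤ 4 * l * (qw y * w ^ 2) := by
          rw [div_le_iff₀ e]
          have := mul_le_mul_of_nonneg_left (qw_bounds y).1 (by positivity : 0 ≤ l * w ^ 2)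
          linarith
        have c2 : 20 * w ≤ l * w ^ 2 / exp y + 100 / l * exp y := by
          have : 0 ≤ (l * w - 10 * exp y) ^ 2 / (l * exp y) := by positivity
          have e2 : (l * w - 10 * exp y) ^ 2 / (l * exp y) =
              l * w ^ 2 / exp y + 100 / l * exp y - 20 * w := by
            field_simp
            ring
          linarith
        linarith
      rw [mul_one]
      linarith

/-- The Riccati-type differential inequality at a fixed time. -/
lemma Slice.riccati (h : Slice v M D) (k : Cutoff) (hL : 0 ≤ L) {F : ℝ}
    (hF : F = (∫ y, phL k L y * exp y * v y) - (∫ y, phL k L y * exp y * nh y)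
      - (20 * (∫ y, exp y * nh y) + 20 * M * exp 1)) :
    (∫ y, exp y * v y) - (∫ y, exp y * nh y) - M * exp (1 - L)
      - 20 * (∫ y, v y * k.S1 (y + L)) + (max F 0) ^ 2 / 1600 ≤
      ∫ y, kG (phL1 k L) (phL2 k L) y (v y) := by
  have h1 := h.R_lower k hL
  have hE : 0 ≤ ∫ y, qw y * k.S (y + L) * (v y - nh y) ^ 2 :=
    integral_nonneg fun y =>
      mul_nonneg (mul_nonneg (qw_pos y).le (k.nonneg _)) (sq_nonneg _)
  suffices (max F 0) ^ 2 / 1600 ≤ ∫ y, qw y * k.S (y + L) * (v y - nh y) ^ 2 by linarith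
  rcases le_or_gt F 0 with hf | hf
  · rw [max_eq_right hf]; simpa using hE
  rw [max_eq_left hf.le]
  have h2 := h.F_upper k hL (l := 200 / F) (by positivity)
  set E := ∫ y, qw y * k.S (y + L) * (v y - nh y) ^ 2
  have e1 : (100:ℝ) / (200 / F) = F / 2 := by field_simp; norm_num
  rw [e1] at h2
  have h3 : F / 2 ≤ 4 * (200 / F) * E := by linarith
  have h4 : 4 * (200 / F) * E = 800 * E / F := by ring
  rw [h4, le_div_iff₀ hf] at h3
  linarith
end

/-! ### Blow-up of the functional -/

/-- A function with `H' ≥ a + c max(H,0)²` cannot exist on a long interval. -/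
lemma riccati_blowup {H H' : ℝ → ℝ} {a c B T : ℝ} (ha : 0 < a) (hc : 0 < c) (hB : 0 ≤ B)
    (hT : T = 1 + (B + 1) / a + 1 / c) (hd : ∀ t, 1 ≤ t → t ≤ T → HasDerivAt H (H' t) t)
    (hH : ∀ t, 1 ≤ t → t ≤ T → a + c * (max (H t) 0) ^ 2 ≤ H' t) (h1 : -B ≤ H 1) : False := by
  have hB1 : 0 < (B + 1) / a := by positivity
  have hc1 : 0 < 1 / c := by positivity
  have m1 : MonotoneOn (fun t => H t - a * t) (Icc 1 T) := by
    have hd' : ∀ t ∈ Icc 1 T, HasDerivAt (fun t => H t - a * t) (H' t - a) t := fun t ht => by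
      have g : HasDerivAt (fun t => a * t) a t := by simpa using (hasDerivAt_id t).const_mul a
      exact (hd t ht.1 ht.2).sub g
    refine monotoneOn_of_deriv_nonneg (convex_Icc _ _)
      (fun t ht => (hd' t ht).continuousAt.continuousWithinAt)
      (fun t ht => (hd' t (interior_subset ht)).differentiableAt.differentiableWithinAt) ?_
    intro t ht
    have ht := interior_subset ht
    rw [(hd' t ht).deriv]
    have := hH t ht.1 ht.2
    have : 0 ≤ c * (max (H t) 0) ^ 2 := by positivity
    linarith
  set t1 := 1 + (B + 1) / a with ht1
  have hge : ∀ t, t1 ≤ t → t ≤ T → 1 ≤ H t := by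
    intro t h2 h3
    have := m1 (a := 1) (b := t) ⟨le_rfl, by linarith⟩ ⟨by linarith, h3⟩ (by linarith)
    simp only at this
    have e : a * t1 = a + (B + 1) := by rw [ht1]; field_simp
    have := mul_le_mul_of_nonneg_left h2 ha.le
    linarith
  have m2 : AntitoneOn (fun t => (H t)⁻¹ + c * t) (Icc t1 T) := by
    have hd' : ∀ t ∈ Icc t1 T, HasDerivAt (fun t => (H t)⁻¹ + c * t) (-H' t / H t ^ 2 + c) t :=
      fun t ht => by
        have h1 := hge t ht.1 ht.2
        have g : HasDerivAt (fun t => c * t) c t := by simpa using (hasDerivAt_id t).const_mul c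
        have h2 : 1 ≤ t := by linarith [ht.1]
        have h3 : H t ≠ 0 := by linarith
        exact ((hd t h2 ht.2).inv h3).add g
    refine antitoneOn_of_deriv_nonpos (convex_Icc _ _)
      (fun t ht => (hd' t ht).continuousAt.continuousWithinAt)
      (fun t ht => (hd' t (interior_subset ht)).differentiableAt.differentiableWithinAt) ?_
    intro t ht
    have ht := interior_subset ht
    rw [(hd' t ht).deriv]
    have g := hge t ht.1 ht.2
    have := hH t (by linarith [ht.1]) ht.2
    rw [max_eq_left (by linarith)] at this
    have : c ≤ H' t / H t ^ 2 := by
      rw [le_div_iff₀ (by positivity)]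
      linarith
    rw [neg_div]
    linarith
  have hf := m2 (a := t1) (b := T) ⟨le_rfl, by linarith⟩ ⟨by linarith, le_rfl⟩ (by linarith)
  simp only at hf
  have g1 := hge t1 le_rfl (by linarith)
  have g2 := hge T (by linarith) le_rfl
  have i1 : (H t1)⁻¹ ≤ 1 := inv_le_one_of_one_le₀ g1
  have i2 : 0 < (H T)⁻¹ := by positivity
  have e : c * T = c * t1 + 1 := by rw [hT]; field_simp
  linarith

section
variable {m my myy : ℝ → ℝ → ℝ} {M : ℝ}

lemma KS.slice (h : KS m my myy M) {t : ℝ} (ht : 0 < t) : ∃ D, Slice (fun y => m y t) M D := by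
  obtain ⟨D, -, hD⟩ := h.dom (T := t + 1) (by linarith)
  exact ⟨D, h.sol.cont_u ht, fun y => h.nn y t ht, fun y => h.le y t ht,
    fun y => hD y t ht (by linarith)⟩

lemma tst_one : Tst (fun _ => 1) (fun _ => 0) (fun _ => 0) 1 0 where
  d1 := fun y => hasDerivAt_const y 1
  d2 := fun y => hasDerivAt_const y 0
  c2 := continuous_const
  b0 := by simp
  b1 := by simp
  b2 := by simp
  z := fun _ _ => rfl

lemma KS.mass_const (h : KS m my myy M) {s t : ℝ} (hs : 0 < s) (hst : s ≤ t) :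
    ∫ y, exp y * m y t = ∫ y, exp y * m y s := by
  have := h.weak tst_one hs hst
  simp [kG] at this
  linarith

lemma KS.deriv_test (h : KS m my myy M) {φ φ1 φ2 : ℝ → ℝ} {C L : ℝ} (T : Tst φ φ1 φ2 C L)
    {t : ℝ} (ht : 1 ≤ t) :
    HasDerivAt (fun s => ∫ y, φ y * exp y * m y s) (∫ y, kG φ1 φ2 y (m y t)) t := by
  have hC := T.C0
  have hM : 0 ≤ M := (h.nn 0 1 one_pos).trans (h.le 0 1 one_pos)
  have hct := (h.cont_whole (g := kG φ1 φ2) T.kG_cont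
    (K := C + 3 * (C * exp L) + C + C * exp L * exp L * M) (by positivity)
    (fun y v hv hvM => T.kG_bound y v hv hvM)).2
  have hcon : ContinuousOn (fun t => ∫ y, kG φ1 φ2 y (m y t)) (Ioi 0) :=
    fun s hs => (hct s hs).continuousWithinAt
  have hI : HasDerivAt (fun s => ∫ t in (1/2:ℝ)..s, ∫ y, kG φ1 φ2 y (m y t))
      (∫ y, kG φ1 φ2 y (m y t)) t := by
    refine intervalIntegral.integral_hasDerivAt_right ?_ ?_ (hct t (by linarith))
    · refine ContinuousOn.intervalIntegrable (hcon.mono fun s hs => ?_)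
      rw [uIcc_of_le (by linarith)] at hs
      exact lt_of_lt_of_le (by norm_num) hs.1
    · exact hcon.stronglyMeasurableAtFilter isOpen_Ioi t (show (0:ℝ) < t by linarith)
  refine (hI.add_const (∫ y, φ y * exp y * m y (1/2))).congr_of_eventuallyEq ?_
  filter_upwards [eventually_ge_nhds (show (1/2:ℝ) < t by linarith)] with s hs
  rw [h.weak T (by norm_num) hs]
  ring

/-- The error caused by the cutoff of the test function in `-j ≤ y ≤ -j + 1`. -/
noncomputable def leak (k : Cutoff) (m : ℝ → ℝ → ℝ) (j : ℕ) (t : ℝ) : ℝ :=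
  20 * ∫ y, m y t * k.S1 (y + j)

lemma leak_nonneg (h : KS m my myy M) (k : Cutoff) (j : ℕ) {t : ℝ} (ht : 0 < t) :
    0 ≤ leak k m j t :=
  mul_nonneg (by norm_num) (integral_nonneg fun y => mul_nonneg (h.nn y t ht) (k.S1_nonneg _))

lemma leak_cont (h : KS m my myy M) (k : Cutoff) (j : ℕ) {t : ℝ} (ht : 0 < t) :
    ContinuousAt (leak k m j) t := by
  have hc := k.c1
  have hC := k.hC
  refine ((h.cont_whole (g := fun y v => v * k.S1 (y + j)) ?_ (K := k.C * exp j) ?_ ?_).2 t ht).const_mul 20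
  · fun_prop
  · positivity
  · intro y v hv _
    rw [abs_of_nonneg (mul_nonneg hv (k.S1_nonneg _))]
    rcases le_total (y + j) 0 with hy | hy
    · rw [k.S1_zero _ hy, mul_zero]; positivity
    · have : 1 ≤ exp j * exp y := by
        rw [← exp_add]; exact one_le_exp (by linarith)
      calc v * k.S1 (y + j) ≤ v * k.C := mul_le_mul_of_nonneg_left (k.S1_le _) hv
        _ ≤ v * k.C * (exp j * exp y) := le_mul_of_one_le_right (by positivity) this
        _ = _ := by ring

/-- The cutoff error disappears in the limit; this uses that the boundary value at `-∞` is zero. -/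
lemma leak_int (h : KS m my myy M) (k : Cutoff) {T : ℝ} (hT : 1 ≤ T) :
    Tendsto (fun j : ℕ => ∫ t in (1:ℝ)..T, leak k m j t) atTop (𝓝 0) := by
  have hb : ∀ t, 0 < t → ∀ y, |m y t| ≤ M := fun t ht y => by
    rw [abs_of_nonneg (h.nn y t ht)]; exact h.le y t ht
  have := intervalIntegral.tendsto_integral_filter_of_dominated_convergence
    (μ := volume) (a := 1) (b := T) (l := atTop) (F := fun j : ℕ => leak k m j) (f := fun _ => 0)
    (fun _ => 20 * (M * ∫ y, k.S1 y)) ?_ ?_ ?_ ?_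
  · simpa using this
  · refine Eventually.of_forall fun j => ?_
    rw [uIoc_of_le hT]
    refine ContinuousOn.aestronglyMeasurable (fun t ht => ?_) measurableSet_Ioc
    exact (leak_cont h k j (by linarith [ht.1])).continuousWithinAt
  · refine Eventually.of_forall fun j => Eventually.of_forall fun t ht => ?_
    rw [uIoc_of_le hT] at ht
    rw [leak, norm_mul, Real.norm_eq_abs, abs_of_nonneg (by norm_num : (0:ℝ) ≤ 20)]
    exact mul_le_mul_of_nonneg_left (k.mul_S1_le (hb t (by linarith [ht.1])) _) (by norm_num)
  · exact intervalIntegrable_const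
  · refine Eventually.of_forall fun t ht => ?_
    rw [uIoc_of_le hT] at ht
    have ht0 : 0 < t := by linarith [ht.1]
    simpa [leak] using (k.mul_S1_tendsto (h.sol.cont_u ht0) (hb t ht0) (h.bot t ht0)).const_mul 20

/-- A global solution vanishing at the origin has at most the Bose–Einstein mass. -/
theorem KS.mass_le (h : KS m my myy M) : ¬ ∫ y, exp y * nh y < ∫ y, exp y * m y 1 := by
  intro hlt
  obtain ⟨k⟩ := exists_cutoff
  have hM : 0 ≤ M := (h.nn 0 1 one_pos).trans (h.le 0 1 one_pos)
  set N := ∫ y, exp y * m y 1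
  set Nh := ∫ y, exp y * nh y with hNh
  have hN0 : 0 ≤ N := integral_nonneg fun y => mul_nonneg (exp_pos _).le (h.nn y 1 one_pos)
  have hNh0 : 0 ≤ Nh := integral_nonneg fun y => mul_nonneg (exp_pos _).le (nh_pos y).le
  set a := (N - Nh) / 2
  have ha : 0 < a := by simp only [a]; linarith
  set K1 := 20 * Nh + 20 * M * exp 1 with hK1
  have hK10 : 0 ≤ K1 := by positivity
  set B := 20 * N + 20 + K1 + 1
  have hB : 0 ≤ B := by positivity
  set T := 1 + (B + 1) / a + 1 / (1 / 1600 : ℝ) with hT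
  have hT1 : 1 ≤ T := by
    have : 0 < (B + 1) / a := by positivity
    rw [hT]; norm_num; linarith
  have hexp : Tendsto (fun j : ℕ => M * exp (1 - j)) atTop (𝓝 0) := by
    have : Tendsto (fun j : ℕ => (1:ℝ) - j) atTop atBot :=
      tendsto_atBot_add_const_left _ _ (tendsto_neg_atTop_atBot.comp tendsto_natCast_atTop_atTop)
    simpa using (tendsto_exp_atBot.comp this).const_mul M
  obtain ⟨j, hj1, hj2⟩ := ((hexp.eventually (gt_mem_nhds ha)).and
    ((leak_int h k hT1).eventually (gt_mem_nhds one_pos))).exists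
  have hj0 : (0:ℝ) ≤ j := Nat.cast_nonneg j
  have tst := phL_tst k hj0
  set P := ∫ y, phL k j y * exp y * nh y with hP
  have lc : ContinuousOn (leak k m j) (Ioi 0) :=
    fun t ht => (leak_cont h k j ht).continuousWithinAt
  have li : ∀ s t, 0 < s → s ≤ t → IntervalIntegrable (leak k m j) volume s t :=
    fun s t hs hst => ContinuousOn.intervalIntegrable (lc.mono fun r hr => by
      rw [uIcc_of_le hst] at hr
      exact lt_of_lt_of_le hs hr.1)
  refine riccati_blowup (H := fun t => (∫ y, phL k j y * exp y * m y t)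
      + (∫ s in (1:ℝ)..t, leak k m j s) - (P + K1 + 1))
    (H' := fun t => (∫ y, kG (phL1 k j) (phL2 k j) y (m y t)) + leak k m j t)
    ha (by norm_num : (0:ℝ) < 1 / 1600) hB hT ?_ ?_ ?_
  · intro t ht _
    refine ((h.deriv_test tst ht).add ?_).sub_const _
    exact intervalIntegral.integral_hasDerivAt_right (li 1 t one_pos ht)
      (lc.stronglyMeasurableAtFilter isOpen_Ioi t (show (0:ℝ) < t by linarith))
      (leak_cont h k j (by linarith))
  · intro t ht htT
    have ht0 : 0 < t := by linarith
    obtain ⟨D, hD⟩ := h.slice ht0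
    have r := hD.riccati k hj0 rfl
    have mc := h.mass_const one_pos ht
    simp only [mc] at r
    have l1 : ∫ s in (1:ℝ)..t, leak k m j s ≤ 1 := by
      have e := intervalIntegral.integral_add_adjacent_intervals (li 1 t one_pos ht)
        (li t T ht0 htT)
      have : 0 ≤ ∫ s in t..T, leak k m j s :=
        intervalIntegral.integral_nonneg htT fun s hs => leak_nonneg h k j (by linarith [hs.1])
      linarith
    have l2 : leak k m j t = 20 * ∫ y, m y t * k.S1 (y + j) := rfl
    rw [← l2, ← hNh, ← hK1, ← hP] at r
    have mx : (max ((∫ y, phL k j y * exp y * m y t)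
        + (∫ s in (1:ℝ)..t, leak k m j s) - (P + K1 + 1)) 0) ^ 2 ≤
        (max ((∫ y, phL k j y * exp y * m y t) - P - K1) 0) ^ 2 := by
      refine pow_le_pow_left₀ (le_max_right _ _) (max_le_max (by linarith) le_rfl) 2
    have ea : 2 * a = N - Nh := by simp only [a]; ring
    change N - Nh - M * exp (1 - j) - leak k m j t + _ ≤ _ at r
    linarith
  · obtain ⟨D, hD⟩ := h.slice one_pos
    have r := hD.F_lower k hj0
    simp only [intervalIntegral.integral_same, B]
    change -20 * N - 20 ≤ _ - P at r
    linarith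
end

/-! ### Back to the original variables -/

lemma image_exp_univ : exp '' univ = Ioi 0 := by rw [image_univ, range_exp]

lemma integral_log_var (g : ℝ → ℝ) : ∫ x in Ioi (0:ℝ), g x = ∫ y, exp y * g (exp y) := by
  have := integral_image_eq_integral_abs_deriv_smul (s := univ) MeasurableSet.univ
    (fun x _ => (hasDerivAt_exp x).hasDerivWithinAt) (exp_injective.injOn) g
  rw [image_exp_univ] at this
  simpa [abs_of_pos (exp_pos _)] using this

lemma integrable_log_var (g : ℝ → ℝ) :
    IntegrableOn g (Ioi (0:ℝ)) ↔ Integrable (fun y => exp y * g (exp y)) := by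
  have := integrableOn_image_iff_integrableOn_abs_deriv_smul (s := univ) MeasurableSet.univ
    (fun x _ => (hasDerivAt_exp x).hasDerivWithinAt) (exp_injective.injOn) g
  rw [image_exp_univ] at this
  simpa [abs_of_pos (exp_pos _)] using this

lemma nhat_exp (y : ℝ) : nhat 0 (exp y) = nh y := by
  simp only [nhat, nh, add_zero]
  rw [two_mul, exp_add, sq]

lemma integral_nhat : ∫ x in Ioi (0:ℝ), nhat 0 x = ∫ y, exp y * nh y := by
  rw [integral_log_var]
  simp only [nhat_exp]

/-- The equation in expanded (non-divergence) form. -/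
lemma IsKompSol.expanded {n : ℝ → ℝ → ℝ} {n₀ : ℝ → ℝ} (h : IsKompSol n n₀) {x t : ℝ}
    (hx : 0 < x) (ht : 0 < t) :
    HasDerivAt (fun τ => n x τ) (x ^ 2 * deriv (deriv (fun y => n y t)) x
      + (x ^ 2 + 2 * n x t) * deriv (fun y => n y t) x + (2 * x - 2) * n x t) t := by
  have d1 := (h.diff_x t ht x hx).hasDerivAt
  have d2 := (h.diff_xx t ht x hx).hasDerivAt
  have p1 : HasDerivAt (fun x : ℝ => x ^ 2) (2 * x) x := by simpa using hasDerivAt_pow 2 x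
  have p2 : HasDerivAt (fun x : ℝ => x ^ 2 - 2 * x) (2 * x - 2) x := by
    have : HasDerivAt (fun x : ℝ => 2 * x) 2 x := by simpa using (hasDerivAt_id x).const_mul 2
    exact p1.sub this
  have dJ : HasDerivAt (fun y => kompFlux (fun z => n z t) y) (x ^ 2 * deriv (deriv (fun y => n y t)) x
      + (x ^ 2 + 2 * n x t) * deriv (fun y => n y t) x + (2 * x - 2) * n x t) x := by
    refine HasDerivAt.congr_deriv (((p1.mul d2).add (p2.mul d1)).add (d1.pow 2)) ?_
    simp only [Nat.cast_ofNat]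
    ring
  have := (h.diff_t x hx t ht).hasDerivAt
  rwa [h.pde x hx t ht, dJ.deriv] at this

/-- A solution that vanishes at the origin at all positive times, in the variable `y = log x`. -/
lemma IsKompSol.toKS {n : ℝ → ℝ → ℝ} {n₀ : ℝ → ℝ} (h : IsKompSol n n₀)
    (hb : ∀ t, 0 < t → Tendsto (fun x => n x t) (𝓝[>] (0:ℝ)) (𝓝 0)) :
    ∃ M, KS (fun y t => n (exp y) t) (fun y t => exp y * deriv (fun x => n x t) (exp y))
      (fun y t => exp y * deriv (fun x => n x t) (exp y)
        + exp y * (exp y * deriv (deriv (fun x => n x t)) (exp y))) M := by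
  obtain ⟨M, hM⟩ := h.bounded
  have sq_exp : ∀ y : ℝ, exp (2 * y) = exp y ^ 2 := fun y => by rw [two_mul, exp_add, sq]
  refine ⟨M, ⟨⟨?_, ?_, ?_, ?_, ?_, ?_⟩, ?_, ?_, ?_, ?_, ?_⟩⟩
  · fun_prop
  · fun_prop
  · refine h.contOn.comp (f := fun p : ℝ × ℝ => (exp p.1, p.2))
      (Continuous.continuousOn (by fun_prop)) ?_
    rintro ⟨y, t⟩ ⟨-, ht⟩
    exact ⟨exp_pos y, ht⟩
  · intro t ht y
    refine HasDerivAt.congr_deriv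
      ((h.diff_x t ht _ (exp_pos y)).hasDerivAt.comp y (hasDerivAt_exp y)) ?_
    ring
  · intro t ht y
    refine HasDerivAt.congr_deriv ((hasDerivAt_exp y).mul
      ((h.diff_xx t ht _ (exp_pos y)).hasDerivAt.comp y (hasDerivAt_exp y))) ?_
    ring
  · intro t ht y
    refine HasDerivAt.congr_deriv (h.expanded (exp_pos y) ht) ?_
    rw [exp_neg]
    have := exp_pos y
    field_simp
    ring
  · exact fun y t ht => h.nonneg _ t (exp_pos y) ht
  · exact fun y t ht => hM _ t (exp_pos y) ht
  · intro T hT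
    obtain ⟨R, hR, hd⟩ := h.decay T hT 1 one_pos
    refine ⟨max 1 (R ^ 2 * M), fun y t ht htT => ?_⟩
    rw [sq_exp]
    rcases le_total R (exp y) with hy | hy
    · exact (hd _ hy t ht.le htT).le.trans (le_max_left _ _)
    · refine le_trans ?_ (le_max_right _ _)
      exact mul_le_mul (pow_le_pow_left₀ (exp_pos y).le hy 2) (hM _ t (exp_pos y) ht)
        (h.nonneg _ t (exp_pos y) ht) (by positivity)
  · intro t ht
    rw [Metric.tendsto_atTop]
    intro ε hε
    obtain ⟨R, hR, hd⟩ := h.decay (t + 1) (by linarith) ε hε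
    refine ⟨log R, fun y hy => ?_⟩
    rw [sq_exp, Real.dist_eq, sub_zero, abs_of_nonneg
      (mul_nonneg (by positivity) (h.nonneg _ t (exp_pos y) ht))]
    exact hd _ ((log_le_iff_le_exp hR).1 hy) t ht.le (by linarith)
  · intro t ht
    exact (hb t ht).comp (tendsto_nhdsWithin_iff.2
      ⟨tendsto_exp_atBot, Eventually.of_forall fun y => exp_pos y⟩)

/-- Without loss at the origin the mass at time `1` is the initial mass. -/
lemma IsKompSol.mass_init {n : ℝ → ℝ → ℝ} {n₀ : ℝ → ℝ} (h : IsKompSol n n₀)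
    {my myy : ℝ → ℝ → ℝ} {M : ℝ} (hk : KS (fun y t => n (exp y) t) my myy M)
    (h0 : IntegrableOn n₀ (Ioi 0)) :
    ∫ y, exp y * n (exp y) 1 = ∫ x in Ioi (0:ℝ), n₀ x := by
  have key : ∀ᶠ t in 𝓝[>] (0:ℝ), |(∫ y, exp y * n (exp y) 1) - ∫ x in Ioi (0:ℝ), n₀ x| ≤
      ∫ x in Ioi (0:ℝ), |n x t - n₀ x| := by
    filter_upwards [self_mem_nhdsWithin,
      (nhdsWithin_le_nhds (eventually_le_nhds (zero_lt_one (α := ℝ))) : ∀ᶠ t in 𝓝[>] (0:ℝ), t ≤ 1)]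
      with t ht ht1
    have ht : 0 < t := ht
    obtain ⟨D, hD⟩ := hk.slice ht
    have hi : IntegrableOn (fun x => n x t) (Ioi 0) := (integrable_log_var _).2 hD.mass
    have e := hk.mass_const ht ht1
    rw [e, ← integral_log_var (fun x => n x t), ← integral_sub hi h0]
    exact abs_integral_le_integral_abs
  have := ge_of_tendsto h.l1init key
  exact sub_eq_zero.1 (abs_nonpos_iff.1 this)

lemma no_loss_contradiction {n : ℝ → ℝ → ℝ} {n₀ : ℝ → ℝ} (h : IsKompSol n n₀)
    (hmass : (∫ x in Ioi (0:ℝ), nhat 0 x) < ∫ x in Ioi (0:ℝ), n₀ x)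
    (hb : ∀ t, 0 < t → Tendsto (fun x => n x t) (𝓝[>] (0:ℝ)) (𝓝 0)) : False := by
  rw [integral_nhat] at hmass
  have hnn : 0 ≤ ∫ y, exp y * nh y :=
    integral_nonneg fun y => mul_nonneg (exp_pos _).le (nh_pos y).le
  have h0 : IntegrableOn n₀ (Ioi 0) := by
    by_contra hc
    rw [integral_undef hc] at hmass
    linarith
  obtain ⟨M, hk⟩ := h.toKS hb
  refine hk.mass_le ?_
  rw [h.mass_init hk h0]
  exact hmass

/-! ### The Bose–Einstein mass -/

lemma int_gamma (k : ℕ) : IntegrableOn (fun x : ℝ => x ^ 2 * exp (-((k + 1) * x))) (Ioi 0) ∧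
    ∫ x in Ioi (0:ℝ), x ^ 2 * exp (-((k + 1) * x)) = 2 * (1 / ((k:ℝ) + 1) ^ 3) := by
  have hk : (0:ℝ) < k + 1 := by positivity
  have e : ∫ x in Ioi (0:ℝ), x ^ 2 * exp (-((k + 1) * x)) = 2 * (1 / ((k:ℝ) + 1) ^ 3) := by
    have := Real.integral_rpow_mul_exp_neg_mul_Ioi (a := 3) (r := k + 1) (by norm_num) hk
    have g3 : Real.Gamma 3 = 2 := by
      have := Real.Gamma_nat_eq_factorial 2
      rw [show ((2:ℕ):ℝ) + 1 = 3 by norm_num] at this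
      simpa using this
    rw [g3] at this
    norm_num at this
    norm_cast at this
    push_cast at this
    rw [this]
    ring
  refine ⟨?_, e⟩
  by_contra hc
  rw [integral_undef hc] at e
  have : 0 < 2 * (1 / ((k:ℝ) + 1) ^ 3) := by positivity
  linarith

lemma nhat_mass : ∫ x in Ioi (0:ℝ), nhat 0 x = 2 * ∑' k : ℕ, (1:ℝ) / (k + 1) ^ 3 := by
  have hs : Summable (fun k : ℕ => (1:ℝ) / ((k:ℝ) + 1) ^ 3) := by
    have := (summable_nat_add_iff 1).2 (Real.summable_one_div_nat_pow.2 (by norm_num : 1 < 3))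
    simpa using this
  have hn : ∀ k : ℕ, ∫ x in Ioi (0:ℝ), ‖x ^ 2 * exp (-(((k:ℝ) + 1) * x))‖ =
      2 * (1 / ((k:ℝ) + 1) ^ 3) := fun k => by
    rw [← (int_gamma k).2]
    congr 1
    ext x
    rw [Real.norm_eq_abs, abs_of_nonneg (by positivity)]
  have H := hasSum_integral_of_summable_integral_norm
    (F := fun (k : ℕ) (x : ℝ) => x ^ 2 * exp (-(((k:ℝ) + 1) * x))) (μ := volume.restrict (Ioi 0))
    (fun k => (int_gamma k).1) (by simp only [hn]; exact hs.mul_left 2)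
  simp only [(int_gamma _).2] at H
  rw [← tsum_mul_left, H.tsum_eq]
  refine setIntegral_congr_fun measurableSet_Ioi fun x hx => ?_
  have hx : 0 < x := hx
  have hlt : exp (-x) < 1 := exp_lt_one_iff.2 (by linarith)
  have g := (hasSum_geometric_of_lt_one (exp_pos (-x)).le hlt).mul_left (x ^ 2 * exp (-x))
  have e : ∀ k : ℕ, x ^ 2 * exp (-(((k:ℝ) + 1) * x)) = x ^ 2 * exp (-x) * exp (-x) ^ k := by
    intro k
    rw [mul_assoc, ← exp_nat_mul, ← exp_add]
    congr 2
    ring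
  simp only [e, g.tsum_eq, nhat, add_zero]
  have h1 : 1 < exp x := one_lt_exp_iff.2 hx
  have h2 : exp x - 1 ≠ 0 := by linarith
  rw [exp_neg]
  have h3 : 1 - (exp x)⁻¹ ≠ 0 := by
    have := exp_pos x
    have : (exp x)⁻¹ < 1 := inv_lt_one_of_one_lt₀ h1
    linarith
  field_simp

theorem onset_of_loss_mass_condition
    (n : ℝ → ℝ → ℝ) (n₀ : ℝ → ℝ)
    (hsol : IsKompSol n n₀)
    (h0nonneg : ∀ x : ℝ, 0 < x → 0 ≤ n₀ x)
    (h0bdd : ∃ C : ℝ, ∀ x : ℝ, 0 < x → n₀ x ≤ C)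
    (h0decay : Filter.Tendsto (fun x => x ^ 2 * n₀ x) Filter.atTop (nhds 0))
    (b : ℝ → ℝ)
    (hb : ∀ t : ℝ, 0 < t →
      Filter.Tendsto (fun x => n x t) (𝓝[>] (0:ℝ)) (nhds (b t)))
    (hne : ∃ x : ℝ, 0 < x ∧ n₀ x ≠ 0)
    (hmass : (∫ x in Set.Ioi (0:ℝ), nhat 0 x) < ∫ x in Set.Ioi (0:ℝ), n₀ x) :
    ((∫ x in Set.Ioi (0:ℝ), nhat 0 x) = 2 * ∑' k : ℕ, (1:ℝ) / (k + 1) ^ 3) ∧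
    ∃ t : ℝ, 0 < t ∧ 0 < b t := by
  refine ⟨nhat_mass, ?_⟩
  by_contra hc
  refine no_loss_contradiction hsol hmass fun t ht => ?_
  have h1 : b t ≤ 0 := not_lt.1 fun h => hc ⟨t, ht, h⟩
  have h2 : 0 ≤ b t := by
    refine ge_of_tendsto (hb t ht) ?_
    filter_upwards [self_mem_nhdsWithin] with x hx using hsol.nonneg x t hx ht
  have := hb t ht
  rwa [le_antisymm h1 h2] at this
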